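/- arXiv:2108.02857 — 3 statements merged into one kernel-verified Lean document; each statement's English description precedes it below -/
import Mathlib

section
/- For every θ > 0 and every T > 0, the second moment of F_T := T^{-1/2} ∫₀^T X₁(u)X₂(u) du satisfies |E[F_T²] − 1/(4θ³)| ≤ ((7 + 8θ)/(16θ⁴)) · (1/T). In particular, E[F_T²] → 1/(4θ³) as T → ∞. -/
open MeasureTheory ProbabilityTheory Real Filter Finset
open scoped Topology ENNReal NNReal

noncomputable section

/-- Kolmogorov distance between two Borel measures on `ℝ`. -/
def dKol (μ ν : Measure ℝ) : ℝ :=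
  ⨆ z : ℝ, |(μ (Set.Iic z)).toReal - (ν (Set.Iic z)).toReal|

/-- `X 0, X 1 : ℝ → Ω → ℝ` is a pair of independent centered Gaussian processes,
started at `0`, with almost surely continuous paths on `[0,∞)` and the
Ornstein–Uhlenbeck covariance `E[Xᵢ(s)Xᵢ(t)] = (e^{−θ|t−s|} − e^{−θ(t+s)})/(2θ)`. -/
structure IsOUPair {Ω : Type} [MeasureSpace Ω] (θ : ℝ) (X : Fin 2 → ℝ → Ω → ℝ) : Prop where
  meas : ∀ i t, Measurable (X i t)
  gaussian : ∀ (i : Fin 2) (n : ℕ) (t : Fin n → ℝ) (c : Fin n → ℝ), (∀ j, 0 ≤ t j) →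
      ∃ v : NNReal, Measure.map (fun ω => ∑ j, c j * X i (t j) ω) ℙ = gaussianReal 0 v
  indep : IndepFun (fun ω t => X 0 t ω) (fun ω t => X 1 t ω) ℙ
  cont : ∀ᵐ ω ∂(ℙ : Measure Ω), ∀ i, ContinuousOn (fun t => X i t ω) (Set.Ici 0)
  init : ∀ i ω, X i 0 ω = 0
  cov : ∀ (i : Fin 2) (s t : ℝ), 0 ≤ s → 0 ≤ t →
      ∫ ω, X i s ω * X i t ω ∂ℙ
        = (Real.exp (-θ * |t - s|) - Real.exp (-θ * (t + s))) / (2 * θ)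

variable {Ω : Type} [MeasureSpace Ω]

/-- `F_T := T^{-1/2} ∫₀^T X₁(u) X₂(u) du`. -/
def ouF (X : Fin 2 → ℝ → Ω → ℝ) (T : ℝ) (ω : Ω) : ℝ :=
  (1 / Real.sqrt T) * ∫ u in (0:ℝ)..T, X 0 u ω * X 1 u ω

/-- `X̄ᵢ(T) := T^{-1} ∫₀^T Xᵢ(u) du`. -/
def ouXbar (X : Fin 2 → ℝ → Ω → ℝ) (i : Fin 2) (T : ℝ) (ω : Ω) : ℝ :=
  (1 / T) * ∫ u in (0:ℝ)..T, X i u ω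

/-- `Y_{ij}(T) := ∫₀^T Xᵢ(u)Xⱼ(u) du − T·X̄ᵢ(T)·X̄ⱼ(T)`. -/
def ouY (X : Fin 2 → ℝ → Ω → ℝ) (i j : Fin 2) (T : ℝ) (ω : Ω) : ℝ :=
  (∫ u in (0:ℝ)..T, X i u ω * X j u ω) - T * ouXbar X i T ω * ouXbar X j T ω

/-- Yule's nonsense correlation `ρ(T)`. -/
def ouRho (X : Fin 2 → ℝ → Ω → ℝ) (T : ℝ) (ω : Ω) : ℝ :=
  ouY X 0 1 T ω / Real.sqrt (ouY X 0 0 T ω * ouY X 1 1 T ω)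

/-- `A(n) := (√Tₙ/n) Σ_{k<n} X₁(kΔ)X₂(kΔ)` with `Tₙ = nΔ`. -/
def ouA (X : Fin 2 → ℝ → Ω → ℝ) (n : ℕ) (Δ : ℝ) (ω : Ω) : ℝ :=
  (Real.sqrt (n * Δ) / n) * ∑ k ∈ Finset.range n, X 0 (k * Δ) ω * X 1 (k * Δ) ω

/-- `X̃ᵢ(n) := n^{-1} Σ_{k<n} Xᵢ(kΔ)`. -/
def ouXtilde (X : Fin 2 → ℝ → Ω → ℝ) (i : Fin 2) (n : ℕ) (Δ : ℝ) (ω : Ω) : ℝ :=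
  (1 / n) * ∑ k ∈ Finset.range n, X i (k * Δ) ω

/-- `Ỹ_{ij}(n) := Δ Σ_{k<n} Xᵢ(kΔ)Xⱼ(kΔ) − Tₙ·X̃ᵢ(n)·X̃ⱼ(n)` with `Tₙ = nΔ`. -/
def ouYtilde (X : Fin 2 → ℝ → Ω → ℝ) (i j : Fin 2) (n : ℕ) (Δ : ℝ) (ω : Ω) : ℝ :=
  Δ * ∑ k ∈ Finset.range n, X i (k * Δ) ω * X j (k * Δ) ω
    - (n * Δ) * ouXtilde X i n Δ ω * ouXtilde X j n Δ ω

/-- Yule's discrete nonsense correlation `ρ̃(n)`. -/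
def ouRhoTilde (X : Fin 2 → ℝ → Ω → ℝ) (n : ℕ) (Δ : ℝ) (ω : Ω) : ℝ :=
  ouYtilde X 0 1 n Δ ω / Real.sqrt (ouYtilde X 0 0 n Δ ω * ouYtilde X 1 1 n Δ ω)

/-!
By independence and Fubini, `E[(∫₀ᵀ X Y)²] = ∫₀ᵀ ∫₀ᵀ K(s, t)² ds dt`, where `K` is the common
covariance of `X` and `Y`. For `s ≤ t` the Ornstein–Uhlenbeck kernel factors as
`K(s, t) = e^{-θt} sinh(θs) / θ`, so with `x = 2θT` the double integral is
`T / (4θ³) - (5 - 4 (x + 1) e^{-x} - e^{-2x}) / (16θ⁴)`,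
and the parenthesis lies in `[0, 5]` because `(x + 1) e^{-x} ≤ 1`.
-/

section SecondMoment

variable {S S' Ω : Type*} [MeasurableSpace S] [MeasurableSpace S'] [MeasurableSpace Ω]
  {ν : Measure S} {ν' : Measure S'} {μ : Measure Ω}

lemma memLp_two_uncurry_iff [SFinite μ] {Z : S → Ω → ℝ}
    (hZ : AEStronglyMeasurable (Function.uncurry Z) (ν.prod μ)) :
    MemLp (Function.uncurry Z) 2 (ν.prod μ) ↔
      (∀ᵐ s ∂ν, MemLp (Z s) 2 μ) ∧ Integrable (fun s ↦ ∫ ω, Z s ω ^ 2 ∂μ) ν := by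
  have hsec : ∀ᵐ s ∂ν, (Integrable (fun ω ↦ Z s ω ^ 2) μ ↔ MemLp (Z s) 2 μ) := by
    filter_upwards [hZ.prodMk_left] with s hs
    exact (memLp_two_iff_integrable_sq hs).symm
  rw [memLp_two_iff_integrable_sq hZ, integrable_prod_iff (hZ.fun_pow 2)]
  simp only [Function.uncurry_apply_pair, norm_pow, Real.norm_eq_abs, sq_abs]
  exact and_congr_left' (eventually_congr hsec)

lemma memLp_two_mul_of_indepFun {U V : Ω → ℝ} (hU : MemLp U 2 μ) (hV : MemLp V 2 μ)
    (hUV : IndepFun U V μ) : MemLp (U * V) 2 μ := by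
  refine (memLp_two_iff_integrable_sq (hU.1.mul hV.1)).2 ?_
  have hsq : IndepFun (fun ω ↦ U ω ^ 2) (fun ω ↦ V ω ^ 2) μ :=
    hUV.comp (φ := (· ^ 2)) (ψ := (· ^ 2)) (by fun_prop) (by fun_prop)
  simpa only [Pi.mul_def, mul_pow] using hsq.integrable_mul hU.integrable_sq hV.integrable_sq

lemma memLp_two_uncurry_mul_of_indepFun [SFinite ν] [SFinite ν'] [SFinite μ]
    {X : S → Ω → ℝ} {Y : S' → Ω → ℝ}
    (hX : MemLp (Function.uncurry X) 2 (ν.prod μ)) (hY : MemLp (Function.uncurry Y) 2 (ν'.prod μ))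
    (hXY : IndepFun (fun ω s ↦ X s ω) (fun ω t ↦ Y t ω) μ) :
    MemLp (fun q : (S × S') × Ω ↦ X q.1.1 q.2 * Y q.1.2 q.2) 2 ((ν.prod ν').prod μ) := by
  have hindep (s : S) (t : S') : IndepFun (X s) (Y t) μ :=
    hXY.comp (measurable_pi_apply s) (measurable_pi_apply t)
  have hmeas : AEStronglyMeasurable
      (Function.uncurry fun (p : S × S') ω ↦ X p.1 ω * Y p.2 ω) ((ν.prod ν').prod μ) :=
    (hX.1.comp_quasiMeasurePreserving
      (QuasiMeasurePreserving.prodMap Measure.quasiMeasurePreserving_fst (.id μ))).mul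
    (hY.1.comp_quasiMeasurePreserving
      (QuasiMeasurePreserving.prodMap Measure.quasiMeasurePreserving_snd (.id μ)))
  obtain ⟨hXsec, hXint⟩ := (memLp_two_uncurry_iff hX.1).1 hX
  obtain ⟨hYsec, hYint⟩ := (memLp_two_uncurry_iff hY.1).1 hY
  have hsec : ∀ᵐ p ∂ν.prod ν', MemLp (X p.1) 2 μ ∧ MemLp (Y p.2) 2 μ :=
    (Measure.quasiMeasurePreserving_fst.ae hXsec).and (Measure.quasiMeasurePreserving_snd.ae hYsec)
  refine (memLp_two_uncurry_iff hmeas).2 ⟨?_, (hXint.mul_prod hYint).congr ?_⟩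
  · filter_upwards [hsec] with p hp
    exact memLp_two_mul_of_indepFun hp.1 hp.2 (hindep p.1 p.2)
  · filter_upwards [hsec] with p hp
    simp only [mul_pow]
    exact ((hindep p.1 p.2).integral_fun_comp_mul_comp hp.1.1.aemeasurable hp.2.1.aemeasurable
      (f := (· ^ 2)) (g := (· ^ 2)) (by fun_prop) (by fun_prop)).symm

-- Grouping the integrand as `(X s * Y t) * (X t * Y s)` exhibits it as a product of two square
-- integrable functions, whereas `X s * Y s` need not be square integrable on `S × Ω`.
lemma integrable_mul_mul_mul_of_indepFun [SFinite ν] [SFinite μ] {X Y : S → Ω → ℝ}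
    (hX : MemLp (Function.uncurry X) 2 (ν.prod μ)) (hY : MemLp (Function.uncurry Y) 2 (ν.prod μ))
    (hXY : IndepFun (fun ω s ↦ X s ω) (fun ω s ↦ Y s ω) μ) :
    Integrable (fun q : (S × S) × Ω ↦
      X q.1.1 q.2 * X q.1.2 q.2 * (Y q.1.1 q.2 * Y q.1.2 q.2)) ((ν.prod ν).prod μ) := by
  refine ((memLp_two_uncurry_mul_of_indepFun hX hY hXY).integrable_mul
    (memLp_two_uncurry_mul_of_indepFun hY hX hXY.symm)).congr (ae_of_all _ fun q ↦ ?_)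
  simp only [Pi.mul_apply]
  ring

lemma integral_sq_integral_mul_of_indepFun [SFinite ν] [SFinite μ] {X Y : S → Ω → ℝ}
    (hX : MemLp (Function.uncurry X) 2 (ν.prod μ)) (hY : MemLp (Function.uncurry Y) 2 (ν.prod μ))
    (hXY : IndepFun (fun ω s ↦ X s ω) (fun ω s ↦ Y s ω) μ) :
    ∫ ω, (∫ s, X s ω * Y s ω ∂ν) ^ 2 ∂μ =
      ∫ s, ∫ t, (∫ ω, X s ω * X t ω ∂μ) * (∫ ω, Y s ω * Y t ω ∂μ) ∂ν ∂ν := by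
  have hint := integrable_mul_mul_mul_of_indepFun hX hY hXY
  have hXmeas : ∀ᵐ s ∂ν, AEStronglyMeasurable (X s) μ := hX.1.prodMk_left
  have hYmeas : ∀ᵐ s ∂ν, AEStronglyMeasurable (Y s) μ := hY.1.prodMk_left
  have hfactor : ∀ᵐ p ∂ν.prod ν, ∫ ω, X p.1 ω * X p.2 ω * (Y p.1 ω * Y p.2 ω) ∂μ =
      (∫ ω, X p.1 ω * X p.2 ω ∂μ) * ∫ ω, Y p.1 ω * Y p.2 ω ∂μ := by
    filter_upwards [Measure.quasiMeasurePreserving_fst.ae (hXmeas.and hYmeas),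
      Measure.quasiMeasurePreserving_snd.ae (hXmeas.and hYmeas)] with p hfst hsnd
    have hpair : IndepFun (fun ω ↦ X p.1 ω * X p.2 ω) (fun ω ↦ Y p.1 ω * Y p.2 ω) μ :=
      hXY.comp (φ := fun x : S → ℝ ↦ x p.1 * x p.2) (ψ := fun y : S → ℝ ↦ y p.1 * y p.2)
        (by fun_prop) (by fun_prop)
    exact hpair.integral_fun_mul_eq_mul_integral (hfst.1.mul hsnd.1) (hfst.2.mul hsnd.2)
  calc ∫ ω, (∫ s, X s ω * Y s ω ∂ν) ^ 2 ∂μ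
      = ∫ ω, ∫ p : S × S, X p.1 ω * X p.2 ω * (Y p.1 ω * Y p.2 ω) ∂ν.prod ν ∂μ := by
        congr with ω
        rw [sq, ← integral_prod_mul]
        congr with p
        ring
    _ = ∫ p : S × S, ∫ ω, X p.1 ω * X p.2 ω * (Y p.1 ω * Y p.2 ω) ∂μ ∂ν.prod ν :=
        (integral_integral_swap hint).symm
    _ = ∫ p : S × S, (∫ ω, X p.1 ω * X p.2 ω ∂μ) * ∫ ω, Y p.1 ω * Y p.2 ω ∂μ ∂ν.prod ν :=
        integral_congr_ae hfactor
    _ = _ := integral_prod _ (hint.integral_prod_left.congr hfactor)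

lemma aestronglyMeasurable_uncurry_of_ae_continuousOn {ι : Type*} [TopologicalSpace ι]
    [TopologicalSpace.MetrizableSpace ι] [SecondCountableTopology ι] [MeasurableSpace ι]
    [OpensMeasurableSpace ι] {E : Type*} [NormedAddCommGroup E]
    [SecondCountableTopology E] [MeasurableSpace E] [BorelSpace E] {ν : Measure ι} {s : Set ι}
    (hs : MeasurableSet s) {X : ι → Ω → E} (hmeas : ∀ t ∈ s, Measurable (X t))
    (hcont : ∀ᵐ ω ∂μ, ContinuousOn (fun t ↦ X t ω) s) :
    AEStronglyMeasurable (Function.uncurry X) ((ν.restrict s).prod μ) := by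
  obtain ⟨N, hN, hNmeas, hN0⟩ := exists_measurable_superset_of_null (ae_iff.1 hcont)
  let Z : s → Ω → E := fun t ↦ Nᶜ.indicator (X t)
  have hZcont (ω : Ω) : Continuous fun t ↦ Z t ω := by
    by_cases hω : ω ∈ N
    · simpa [Z, hω] using continuous_const
    · have : ContinuousOn (fun t ↦ X t ω) s := not_not.1 fun h ↦ hω (hN h)
      simpa [Z, hω, Set.domRestrict_def] using this.domRestrict
  have hZ : Measurable (Function.uncurry Z) :=
    measurable_uncurry_of_continuous_of_measurable hZcont
      fun t ↦ (hmeas t t.2).indicator hNmeas.compl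
  have hemb : MeasurableEmbedding (Prod.map ((↑) : s → ι) (id : Ω → Ω)) :=
    (MeasurableEmbedding.subtype_coe hs).prodMap .id
  refine ⟨_, (hemb.measurable_extend hZ measurable_zero).stronglyMeasurable, ?_⟩
  filter_upwards [Measure.quasiMeasurePreserving_fst.ae (ae_restrict_mem hs),
    Measure.quasiMeasurePreserving_snd.ae (measure_eq_zero_iff_ae_notMem.1 hN0)]
    with ⟨t, ω⟩ (ht : t ∈ s) (hω : ω ∉ N)
  have hextend := hemb.injective.extend_apply (Function.uncurry Z) 0 (⟨t, ht⟩, ω)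
  simpa [Z, hω] using hextend.symm

end SecondMoment

lemma integral_integral_eq_two_mul_setIntegral_Iic {α : Type*} [LinearOrder α]
    [TopologicalSpace α] [OrderClosedTopology α] [SecondCountableTopology α] [MeasurableSpace α]
    [OpensMeasurableSpace α] {ν : Measure α} [SFinite ν] [NullSingletonClass ν] {f : α → α → ℝ}
    (hf : Integrable (Function.uncurry f) (ν.prod ν)) (hsymm : ∀ s t, f s t = f t s) :
    ∫ s, ∫ t, f s t ∂ν ∂ν = 2 * ∫ t, ∫ s in Set.Iic t, f s t ∂ν ∂ν := by
  let g : α → α → ℝ := fun s t ↦ (Set.Iic t).indicator (f · t) s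
  have hg : Integrable (Function.uncurry g) (ν.prod ν) :=
    hf.indicator (measurableSet_le measurable_fst measurable_snd)
  have hsplit (s : α) : ∀ᵐ t ∂ν, f s t = g s t + g t s := by
    filter_upwards [ν.ae_ne s] with t ht
    rcases ht.lt_or_gt with h | h
    · simp [g, h.le, h.not_ge, hsymm s t]
    · simp [g, h.le, h.not_ge]
  calc ∫ s, ∫ t, f s t ∂ν ∂ν
      = ∫ s, ∫ t, (g s t + g t s) ∂ν ∂ν := by
        congr with s
        exact integral_congr_ae (hsplit s)
    _ = (∫ s, ∫ t, g s t ∂ν ∂ν) + ∫ s, ∫ t, g t s ∂ν ∂ν :=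
        integral_integral_add hg hg.swap
    _ = 2 * ∫ t, ∫ s, g s t ∂ν ∂ν := by
        rw [integral_integral_swap hg, two_mul]
    _ = 2 * ∫ t, ∫ s in Set.Iic t, f s t ∂ν ∂ν := by
        simp only [g, integral_indicator measurableSet_Iic]

lemma intervalIntegral_integral_eq_two_mul_of_symm {f : ℝ → ℝ → ℝ} {a b : ℝ} (hab : a ≤ b)
    (hf : Continuous (Function.uncurry f)) (hsymm : ∀ s t, f s t = f t s) :
    ∫ s in a..b, ∫ t in a..b, f s t =
      2 * ∫ t in a..b, ∫ s in a..t, f s t := by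
  have hint : Integrable (Function.uncurry f)
      ((volume.restrict (Set.Ioc a b)).prod (volume.restrict (Set.Ioc a b))) := by
    rw [Measure.prod_restrict]
    exact (hf.continuousOn.integrableOn_compact (isCompact_Icc.prod isCompact_Icc)).mono_set
      (Set.prod_mono Set.Ioc_subset_Icc_self Set.Ioc_subset_Icc_self)
  simp only [intervalIntegral.integral_of_le hab]
  rw [integral_integral_eq_two_mul_setIntegral_Iic hint hsymm]
  congr 1
  refine setIntegral_congr_fun measurableSet_Ioc fun t ht ↦ ?_
  simp only [intervalIntegral.integral_of_le ht.1.le]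
  rw [Measure.restrict_restrict measurableSet_Iic, Set.inter_comm, Set.Ioc_inter_Iic,
    min_eq_right ht.2]

section OUCovariance

/-- The covariance kernel `E[X(s)X(t)]` of the Ornstein–Uhlenbeck process started at `0`. -/
def ouCov (θ s t : ℝ) : ℝ :=
  (Real.exp (-θ * |t - s|) - Real.exp (-θ * (t + s))) / (2 * θ)

variable {θ s t T : ℝ}

lemma ouCov_comm (θ s t : ℝ) : ouCov θ s t = ouCov θ t s := by
  rw [ouCov, ouCov, abs_sub_comm, add_comm]

lemma continuous_uncurry_ouCov (θ : ℝ) : Continuous (Function.uncurry (ouCov θ)) := by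
  unfold Function.uncurry ouCov
  fun_prop

lemma ouCov_of_le (hst : s ≤ t) : ouCov θ s t = Real.exp (-(θ * t)) * Real.sinh (θ * s) / θ := by
  have hsub : Real.exp (-θ * (t - s)) = Real.exp (-(θ * t)) * Real.exp (θ * s) := by
    rw [← Real.exp_add]; ring_nf
  have hadd : Real.exp (-θ * (t + s)) = Real.exp (-(θ * t)) * Real.exp (-(θ * s)) := by
    rw [← Real.exp_add]; ring_nf
  rw [ouCov, abs_of_nonneg (sub_nonneg.2 hst), hsub, hadd, Real.sinh_eq]
  ring

lemma integral_sinh_mul_sq (hθ : θ ≠ 0) (t : ℝ) :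
    ∫ s in (0 : ℝ)..t, Real.sinh (θ * s) ^ 2 =
      (Real.sinh (2 * θ * t) - 2 * θ * t) / (4 * θ) := by
  have hderiv (s : ℝ) : HasDerivAt (fun s ↦ (Real.sinh (2 * θ * s) - 2 * θ * s) / (4 * θ))
      (Real.sinh (θ * s) ^ 2) s := by
    have hlin : HasDerivAt (fun s ↦ 2 * θ * s) (2 * θ) s := by
      simpa using (hasDerivAt_id s).const_mul (2 * θ)
    refine ((hlin.sinh.sub hlin).div_const (4 * θ)).congr_deriv ?_
    rw [mul_assoc 2 θ s, Real.cosh_two_mul, Real.cosh_sq]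
    field_simp
    ring
  rw [intervalIntegral.integral_eq_sub_of_hasDerivAt (fun s _ ↦ hderiv s)
    (Continuous.intervalIntegrable (by fun_prop) _ _)]
  simp

lemma integral_sq_ouCov (hθ : θ ≠ 0) (ht : 0 ≤ t) :
    ∫ s in (0 : ℝ)..t, ouCov θ s t ^ 2 =
      Real.exp (-(2 * θ * t)) * (Real.sinh (2 * θ * t) - 2 * θ * t) / (4 * θ ^ 3) := by
  have hexp : Real.exp (-(2 * θ * t)) = Real.exp (-(θ * t)) ^ 2 := by
    rw [← Real.exp_nat_mul]; push_cast; ring_nf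
  calc ∫ s in (0 : ℝ)..t, ouCov θ s t ^ 2
      = ∫ s in (0 : ℝ)..t, Real.exp (-(2 * θ * t)) / θ ^ 2 * Real.sinh (θ * s) ^ 2 := by
        refine intervalIntegral.integral_congr fun s hs ↦ ?_
        rw [Set.uIcc_of_le ht] at hs
        simp only [ouCov_of_le hs.2, hexp]
        ring
    _ = _ := by
        rw [intervalIntegral.integral_const_mul, integral_sinh_mul_sq hθ]
        field_simp

lemma integral_exp_neg_mul_sinh_sub (hθ : θ ≠ 0) (T : ℝ) :
    ∫ t in (0 : ℝ)..T, Real.exp (-(2 * θ * t)) * (Real.sinh (2 * θ * t) - 2 * θ * t) =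
      T / 2 - (5 - 4 * (2 * θ * T + 1) * Real.exp (-(2 * θ * T)) - Real.exp (-(2 * θ * T)) ^ 2) /
        (8 * θ) := by
  have hderiv (t : ℝ) : HasDerivAt
      (fun t ↦ t / 2 + (4 * (2 * θ * t + 1) * Real.exp (-(2 * θ * t)) +
        Real.exp (-(2 * θ * t)) ^ 2) / (8 * θ))
      (Real.exp (-(2 * θ * t)) * (Real.sinh (2 * θ * t) - 2 * θ * t)) t := by
    have hlin : HasDerivAt (fun t ↦ 2 * θ * t) (2 * θ) t := by
      simpa using (hasDerivAt_id t).const_mul (2 * θ)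
    have hexp := hlin.fun_neg.exp
    refine (((hasDerivAt_id t).div_const 2).add
      (((((hlin.add_const 1).const_mul 4).mul hexp).add (hexp.pow 2)).div_const
        (8 * θ))).congr_deriv ?_
    have hinv : Real.exp (-(2 * θ * t)) * Real.exp (2 * θ * t) = 1 := by
      rw [← Real.exp_add, neg_add_cancel, Real.exp_zero]
    rw [Real.sinh_eq]
    field_simp
    push_cast
    linear_combination (-8) * hinv
  rw [intervalIntegral.integral_eq_sub_of_hasDerivAt (fun t _ ↦ hderiv t)
    (Continuous.intervalIntegrable (by fun_prop) _ _)]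
  simp only [mul_zero, neg_zero, Real.exp_zero]
  ring

lemma integral_integral_sq_ouCov (hθ : θ ≠ 0) (hT : 0 ≤ T) :
    ∫ s in (0 : ℝ)..T, ∫ t in (0 : ℝ)..T, ouCov θ s t ^ 2 =
      T / (4 * θ ^ 3) -
        (5 - 4 * (2 * θ * T + 1) * Real.exp (-(2 * θ * T)) - Real.exp (-(2 * θ * T)) ^ 2) /
          (16 * θ ^ 4) := by
  have hinner : ∀ t ∈ Set.uIcc 0 T, ∫ s in (0 : ℝ)..t, ouCov θ s t ^ 2 =
      Real.exp (-(2 * θ * t)) * (Real.sinh (2 * θ * t) - 2 * θ * t) / (4 * θ ^ 3) := by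
    intro t ht
    rw [Set.uIcc_of_le hT] at ht
    exact integral_sq_ouCov hθ ht.1
  rw [intervalIntegral_integral_eq_two_mul_of_symm (f := fun s t ↦ ouCov θ s t ^ 2) hT
    ((continuous_uncurry_ouCov θ).fun_pow 2) (fun s t ↦ by rw [ouCov_comm]),
    intervalIntegral.integral_congr hinner, intervalIntegral.integral_div,
    integral_exp_neg_mul_sinh_sub hθ]
  field_simp
  ring

lemma abs_integral_integral_sq_ouCov_sub_le (hθ : 0 < θ) (hT : 0 ≤ T) :
    |(∫ s in (0 : ℝ)..T, ∫ t in (0 : ℝ)..T, ouCov θ s t ^ 2) - T / (4 * θ ^ 3)| ≤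
      5 / (16 * θ ^ 4) := by
  have hx : 0 ≤ 2 * θ * T := by positivity
  rw [integral_integral_sq_ouCov hθ.ne' hT, sub_sub_cancel_left, abs_neg, abs_div,
    abs_of_pos (show 0 < 16 * θ ^ 4 by positivity)]
  generalize 2 * θ * T = x at hx ⊢
  have hexp_pos := Real.exp_pos (-x)
  have hexp_le : Real.exp (-x) ≤ 1 := Real.exp_le_one_iff.2 (neg_nonpos.2 hx)
  have hmul_le : (x + 1) * Real.exp (-x) ≤ 1 := by
    rw [Real.exp_neg, ← div_eq_mul_inv, div_le_one (Real.exp_pos x)]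
    exact Real.add_one_le_exp x
  gcongr
  rw [abs_le]
  constructor <;> nlinarith [mul_nonneg hx hexp_pos.le]

end OUCovariance

section OUProcess

variable {Ω : Type*} [MeasurableSpace Ω] {μ : Measure Ω} {θ T : ℝ} {X Y : ℝ → Ω → ℝ}

/-- `X`, restricted to times `t ≥ 0`, is a measurable `L²` process whose second moments are those
of the Ornstein–Uhlenbeck process started at `0`. -/
structure HasOUCov (θ : ℝ) (X : ℝ → Ω → ℝ) (μ : Measure Ω) : Prop where
  aestronglyMeasurable :
    AEStronglyMeasurable (Function.uncurry X) ((volume.restrict (Set.Ici 0)).prod μ)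
  memLp : ∀ t, 0 ≤ t → MemLp (X t) 2 μ
  cov : ∀ s t, 0 ≤ s → 0 ≤ t → ∫ ω, X s ω * X t ω ∂μ = ouCov θ s t

lemma HasOUCov.memLp_uncurry [SFinite μ] (hX : HasOUCov θ X μ) (T : ℝ) :
    MemLp (Function.uncurry X) 2 ((volume.restrict (Set.Ioc 0 T)).prod μ) := by
  have hnonneg : ∀ᵐ t ∂volume.restrict (Set.Ioc 0 T), 0 ≤ t :=
    (ae_restrict_mem measurableSet_Ioc).mono fun t ht ↦ ht.1.le
  have hmeas : AEStronglyMeasurable (Function.uncurry X)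
      ((volume.restrict (Set.Ioc 0 T)).prod μ) :=
    hX.aestronglyMeasurable.mono_measure <| Measure.prod_mono
      (Measure.restrict_mono (fun t ht ↦ ht.1.le) le_rfl) le_rfl
  have hvar : IntegrableOn (fun t ↦ ouCov θ t t) (Set.Ioc 0 T) := by
    have : Continuous fun t ↦ ouCov θ t t :=
      (continuous_uncurry_ouCov θ).comp (continuous_id.prodMk continuous_id)
    exact this.integrableOn_Ioc
  refine (memLp_two_uncurry_iff hmeas).2 ⟨hnonneg.mono hX.memLp, hvar.congr ?_⟩
  filter_upwards [hnonneg] with t ht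
  simp only [sq, hX.cov t t ht ht]

lemma HasOUCov.integral_sq_integral_mul [SFinite μ] (hX : HasOUCov θ X μ) (hY : HasOUCov θ Y μ)
    (hXY : IndepFun (fun ω t ↦ X t ω) (fun ω t ↦ Y t ω) μ) (hT : 0 ≤ T) :
    ∫ ω, (∫ u in (0 : ℝ)..T, X u ω * Y u ω) ^ 2 ∂μ =
      ∫ s in (0 : ℝ)..T, ∫ t in (0 : ℝ)..T, ouCov θ s t ^ 2 := by
  simp only [intervalIntegral.integral_of_le hT]
  rw [integral_sq_integral_mul_of_indepFun (hX.memLp_uncurry T) (hY.memLp_uncurry T) hXY]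
  refine setIntegral_congr_fun measurableSet_Ioc fun s hs ↦
    setIntegral_congr_fun measurableSet_Ioc fun t ht ↦ ?_
  simp only [hX.cov s t hs.1.le ht.1.le, hY.cov s t hs.1.le ht.1.le, sq]

lemma IsOUPair.hasOUCov {Ω : Type} [MeasureSpace Ω]
    {X : Fin 2 → ℝ → Ω → ℝ} (hX : IsOUPair θ X) (i : Fin 2) : HasOUCov θ (X i) ℙ where
  aestronglyMeasurable := aestronglyMeasurable_uncurry_of_ae_continuousOn measurableSet_Ici
    (fun t _ ↦ hX.meas i t) (hX.cont.mono fun _ h ↦ h i)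
  memLp t ht := by
    obtain ⟨v, hv⟩ := hX.gaussian i 1 (fun _ ↦ t) (fun _ ↦ 1) fun _ ↦ ht
    simp only [Finset.univ_unique, one_mul, Finset.sum_const, Finset.card_singleton,
      one_smul] at hv
    exact (memLp_map_measure_iff aestronglyMeasurable_id (hX.meas i t).aemeasurable).1
      (hv ▸ memLp_id_gaussianReal 2)
  cov := hX.cov i

end OUProcess

lemma tendsto_of_abs_sub_le_mul_one_div {f : ℝ → ℝ} {L C : ℝ}
    (hf : ∀ T, 0 < T → |f T - L| ≤ C * (1 / T)) : Tendsto f atTop (𝓝 L) := by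
  have hrate : Tendsto (fun T : ℝ ↦ C * (1 / T)) atTop (𝓝 0) := by
    simpa using tendsto_inv_atTop_zero.const_mul C
  refine tendsto_iff_dist_tendsto_zero.2 (squeeze_zero' (by simp) ?_ hrate)
  filter_upwards [eventually_gt_atTop 0] with T hT using hf T hT

theorem stmt_0_general {Ω : Type*} [MeasurableSpace Ω] {μ : Measure Ω} [SFinite μ] {θ : ℝ}
    (hθ : 0 < θ) {X Y : ℝ → Ω → ℝ} (hX : HasOUCov θ X μ) (hY : HasOUCov θ Y μ)
    (hXY : IndepFun (fun ω t ↦ X t ω) (fun ω t ↦ Y t ω) μ) :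
    (∀ T : ℝ, 0 < T →
      |(∫ ω, (1 / Real.sqrt T * ∫ u in (0 : ℝ)..T, X u ω * Y u ω) ^ 2 ∂μ) - 1 / (4 * θ ^ 3)|
        ≤ 5 / (16 * θ ^ 4) * (1 / T)) ∧
    Tendsto (fun T : ℝ ↦ ∫ ω, (1 / Real.sqrt T * ∫ u in (0 : ℝ)..T, X u ω * Y u ω) ^ 2 ∂μ)
      atTop (𝓝 (1 / (4 * θ ^ 3))) := by
  refine ⟨?bound, tendsto_of_abs_sub_le_mul_one_div ?bound⟩
  intro T hT
  simp only [mul_pow, div_pow, one_pow, Real.sq_sqrt hT.le]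
  have hfactor (I : ℝ) : 1 / T * I - 1 / (4 * θ ^ 3) = (I - T / (4 * θ ^ 3)) * (1 / T) := by
    field_simp
  rw [integral_const_mul, hX.integral_sq_integral_mul hY hXY hT.le, hfactor, abs_mul,
    abs_of_pos (one_div_pos.2 hT)]
  gcongr
  exact abs_integral_integral_sq_ouCov_sub_le hθ hT.le

/-- `|E[F_T²] − 1/(4θ³)| ≤ ((7+8θ)/(16θ⁴))·(1/T)` for all `T > 0`;
in particular `E[F_T²] → 1/(4θ³)` as `T → ∞`. -/
theorem stmt_0 (θ : ℝ) (hθ : 0 < θ) [IsProbabilityMeasure (ℙ : Measure Ω)]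
    (X : Fin 2 → ℝ → Ω → ℝ) (hX : IsOUPair θ X) :
    (∀ T : ℝ, 0 < T →
      |(∫ ω, (ouF X T ω) ^ 2 ∂ℙ) - 1 / (4 * θ ^ 3)|
        ≤ ((7 + 8 * θ) / (16 * θ ^ 4)) * (1 / T)) ∧
    Tendsto (fun T : ℝ => ∫ ω, (ouF X T ω) ^ 2 ∂ℙ) atTop (𝓝 (1 / (4 * θ ^ 3))) := by
  obtain ⟨hbound, hlim⟩ := stmt_0_general hθ (hX.hasOUCov 0) (hX.hasOUCov 1) hX.indep
  exact ⟨fun T hT ↦ (hbound T hT).trans (by gcongr; linarith), hlim⟩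

end
end

section
/- For every θ > 0 and every T ≥ 1, d_Kol(2θ^{3/2} F_T, N(0,1)) ≤ c(θ)/√T, where c(θ) := √((2 + 7/(4θ))² + 27/(4θ)). Consequently, F_T converges in distribution to N(0, 1/(4θ³)) as T → ∞. -/
open MeasureTheory ProbabilityTheory Real Filter Finset
open scoped Topology ENNReal NNReal

noncomputable section

variable {Ω : Type} [MeasureSpace Ω]

/-! Conditionally on `X₂`, a weighted sum `∑ X₁(tⱼ) X₂(tⱼ)` is centered Gaussian, and its variance
is a quadratic form `V` in the Gaussian vector `(X₂(tⱼ))`. So its law is a mixture of the laws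
`N(0, V)`, and since `N(0, v)` and `N(0, 1)` are at Kolmogorov distance at most `|v - 1|`, it is at
distance at most `E|V - 1| ≤ √(E(V - 1)²)` from `N(0, 1)`. By Isserlis' theorem `E(V - 1)²` is a
combination of traces of powers of the covariance matrix, which on a regular grid has the entries
`q ^ |j - k| - q ^ (j + k)` and can be summed by hand. Refining the grid turns the sums into `F_T`
almost surely, and the bound survives because `d_Kol` is lower semicontinuous under convergence in
distribution. -/

section KolmogorovDistance

lemma abs_cdf_sub_cdf_le_one (μ ν : Measure ℝ) (z : ℝ) : |cdf μ z - cdf ν z| ≤ 1 :=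
  abs_sub_le_of_nonneg_of_le (cdf_nonneg μ z) (cdf_le_one μ z) (cdf_nonneg ν z) (cdf_le_one ν z)

lemma dKol_nonneg (μ ν : Measure ℝ) : 0 ≤ dKol μ ν :=
  Real.iSup_nonneg fun _ => abs_nonneg _

lemma dKol_map_const_mul (μ ν : Measure ℝ) {a : ℝ} (ha : 0 < a) :
    dKol (μ.map (a * ·)) (ν.map (a * ·)) = dKol μ ν := by
  have preimage_Iic (z : ℝ) : (a * ·) ⁻¹' Set.Iic (a * z) = Set.Iic z := by
    ext x
    simp [mul_le_mul_iff_right₀ ha]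
  refine ((Equiv.mulLeft₀ a ha.ne').iSup_congr fun z => ?_).symm
  simp only [Equiv.mulLeft₀_apply, Measure.map_apply (measurable_const_mul a) measurableSet_Iic,
    preimage_Iic]

variable {μ ν : Measure ℝ} [IsProbabilityMeasure μ] [IsProbabilityMeasure ν]

lemma dKol_eq_iSup_cdf : dKol μ ν = ⨆ z, |cdf μ z - cdf ν z| := by
  simp only [dKol, cdf_eq_real, measureReal_def]

lemma abs_cdf_sub_cdf_le_dKol (z : ℝ) : |cdf μ z - cdf ν z| ≤ dKol μ ν := by
  rw [dKol_eq_iSup_cdf]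
  exact le_ciSup (f := fun z => |cdf μ z - cdf ν z|)
    ⟨1, Set.forall_mem_range.2 (abs_cdf_sub_cdf_le_one μ ν)⟩ z

lemma dKol_le_of_forall_cdf {d : ℝ} (h : ∀ z, |cdf μ z - cdf ν z| ≤ d) : dKol μ ν ≤ d := by
  rw [dKol_eq_iSup_cdf]
  exact ciSup_le h

lemma dKol_le_one : dKol μ ν ≤ 1 :=
  dKol_le_of_forall_cdf (abs_cdf_sub_cdf_le_one μ ν)

end KolmogorovDistance

section LowerSemicontinuity

lemma dense_setOf_measure_singleton_eq_zero (μ : Measure ℝ) [IsFiniteMeasure μ] :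
    Dense {x | μ {x} = 0} := by
  have countable_atoms : {x | 0 < μ {x}}.Countable :=
    Measure.countable_meas_pos_of_disjoint_iUnion (fun x => measurableSet_singleton x)
      fun x y hxy => by simpa using hxy
  simpa only [Set.compl_ofPred, not_lt, nonpos_iff_eq_zero] using countable_atoms.dense_compl ℝ

variable {ι : Type*} {l : Filter ι} {μs : ι → ProbabilityMeasure ℝ} {μ : ProbabilityMeasure ℝ}

lemma tendsto_cdf_of_tendsto (h : Tendsto μs l (𝓝 μ)) {x : ℝ} (hx : (μ : Measure ℝ) {x} = 0) :
    Tendsto (fun i => cdf (μs i : Measure ℝ) x) l (𝓝 (cdf (μ : Measure ℝ) x)) := by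
  have h_Iic := ProbabilityMeasure.tendsto_measure_of_null_frontier_of_tendsto' h
    (E := Set.Iic x) (by rwa [frontier_Iic])
  simp only [cdf_eq_real, measureReal_def]
  exact (ENNReal.tendsto_toReal (measure_ne_top _ _)).comp h_Iic

/-- Off the countably many atoms of the limit the bound passes to the limit pointwise; right
continuity of distribution functions then gives it at the atoms. -/
lemma dKol_le_of_tendsto [l.NeBot] {ν : Measure ℝ} [IsProbabilityMeasure ν]
    (h : Tendsto μs l (𝓝 μ)) {d : ι → ℝ} {D : ℝ} (hd : Tendsto d l (𝓝 D))
    (hμs : ∀ᶠ i in l, dKol (μs i) ν ≤ d i) : dKol μ ν ≤ D := by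
  have bound_off_atoms (x : ℝ) (hx : (μ : Measure ℝ) {x} = 0) : |cdf μ x - cdf ν x| ≤ D :=
    le_of_tendsto_of_tendsto ((tendsto_cdf_of_tendsto h hx).sub_const _).abs hd <|
      hμs.mono fun i hi => (abs_cdf_sub_cdf_le_dKol x).trans hi
  refine dKol_le_of_forall_cdf fun z => ?_
  have right_limit : Tendsto (fun x => |cdf μ x - cdf ν x|) (𝓝[>] z) (𝓝 |cdf μ z - cdf ν z|) :=
    ((((cdf (μ : Measure ℝ)).right_continuous z).sub ((cdf ν).right_continuous z)).abs).mono_left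
      (nhdsWithin_mono z Set.Ioi_subset_Ici_self)
  refine le_of_tendsto_of_frequently right_limit (frequently_iff.2 fun hU => ?_)
  obtain ⟨u, hzu, hu⟩ := mem_nhdsGT_iff_exists_Ioo_subset.1 hU
  obtain ⟨x, hx, hzx, hxu⟩ :=
    (dense_setOf_measure_singleton_eq_zero (μ : Measure ℝ)).exists_between hzu
  exact ⟨x, hu ⟨hzx, hxu⟩, bound_off_atoms x hx⟩

end LowerSemicontinuity

section GaussianComparison

lemma abs_mul_gaussianPDFReal_le_one (x : ℝ) : |x| * gaussianPDFReal 0 1 x ≤ 1 := by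
  have abs_le_exp : |x| ≤ exp (x ^ 2 / 2) := by
    have := add_one_le_exp (x ^ 2 / 2)
    nlinarith [sq_nonneg (|x| - 1), sq_abs x]
  have normalizer_le_one : (√(2 * π))⁻¹ ≤ 1 :=
    inv_le_one_of_one_le₀ (one_le_sqrt.2 (by linarith [pi_gt_three]))
  calc |x| * gaussianPDFReal 0 1 x ≤ exp (x ^ 2 / 2) * (1 * exp (-(x ^ 2 / 2))) := by
        simp only [gaussianPDFReal, NNReal.coe_one, mul_one, sub_zero, neg_div]
        gcongr
    _ = 1 := by rw [one_mul, ← exp_add, add_neg_cancel, exp_zero]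

lemma gaussianPDFReal_zero_one_antitone {x y : ℝ} (h : |x| ≤ |y|) :
    gaussianPDFReal 0 1 y ≤ gaussianPDFReal 0 1 x := by
  simp only [gaussianPDFReal, sub_zero]
  have := sq_le_sq.2 h
  gcongr

lemma abs_cdf_sub_cdf_eq_measureReal_uIoc (μ : Measure ℝ) [IsProbabilityMeasure μ] (a b : ℝ) :
    |cdf μ b - cdf μ a| = μ.real (Set.uIoc a b) := by
  wlog hab : a ≤ b generalizing a b
  · rw [abs_sub_comm, this b a (le_of_not_ge hab), Set.uIoc_comm]
  rw [abs_of_nonneg (sub_nonneg.2 (monotone_cdf μ hab)), Set.uIoc_of_le hab, cdf_eq_real,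
    cdf_eq_real, ← Set.Iic_union_Ioc_eq_Iic hab,
    measureReal_union (Set.Iic_disjoint_Ioc le_rfl) measurableSet_Ioc, add_sub_cancel_left]

lemma abs_cdf_mul_sub_cdf_le {r : ℝ} (hr : 1 ≤ r) (x : ℝ) :
    |cdf (gaussianReal 0 1) (r * x) - cdf (gaussianReal 0 1) x| ≤ r - 1 := by
  have pdf_le : ∀ y ∈ Set.uIoc x (r * x), ‖gaussianPDFReal 0 1 y‖ ≤ gaussianPDFReal 0 1 x := by
    intro y hy
    rw [norm_of_nonneg (gaussianPDFReal_nonneg _ _ _)]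
    refine gaussianPDFReal_zero_one_antitone ?_
    rcases le_total 0 x with hx | hx
    · rw [Set.uIoc_of_le (by nlinarith)] at hy
      exact abs_le_abs_of_nonneg hx hy.1.le
    · rw [Set.uIoc_of_ge (by nlinarith)] at hy
      exact abs_le_abs_of_nonpos hx hy.2
  rw [abs_cdf_sub_cdf_eq_measureReal_uIoc, measureReal_def,
    gaussianReal_apply_eq_integral 0 one_ne_zero, ENNReal.toReal_ofReal
    (setIntegral_nonneg measurableSet_uIoc fun y _ => gaussianPDFReal_nonneg _ _ _)]
  calc ∫ y in Set.uIoc x (r * x), gaussianPDFReal 0 1 y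
      ≤ |∫ y in x..r * x, gaussianPDFReal 0 1 y| := by
        rw [intervalIntegral.abs_integral_eq_abs_integral_uIoc]; exact le_abs_self _
    _ ≤ gaussianPDFReal 0 1 x * |r * x - x| :=
        intervalIntegral.norm_integral_le_of_norm_le_const pdf_le
    _ = (r - 1) * (|x| * gaussianPDFReal 0 1 x) := by
        rw [← sub_one_mul, abs_mul, abs_of_nonneg (sub_nonneg.2 hr)]; ring
    _ ≤ r - 1 := mul_le_of_le_one_right (sub_nonneg.2 hr) (abs_mul_gaussianPDFReal_le_one x)

lemma cdf_gaussianReal_zero_apply_zero {v : ℝ≥0} (hv : v ≠ 0) :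
    cdf (gaussianReal 0 v) 0 = 1 / 2 := by
  have := nullSingletonClass_gaussianReal (μ := 0) hv
  have symm : (gaussianReal 0 v).real (Set.Iic 0) = (gaussianReal 0 v).real (Set.Ioi 0) := by
    conv_lhs => rw [← neg_zero, ← gaussianReal_map_neg,
      map_measureReal_apply measurable_neg measurableSet_Iic]
    simpa using measureReal_congr Ioi_ae_eq_Ici.symm
  have total :=
    probReal_add_probReal_compl (μ := gaussianReal 0 v) (measurableSet_Iic (a := (0 : ℝ)))
  rw [Set.compl_Iic] at total
  rw [cdf_eq_real]
  linarith

/-- `x` and `r * x` lie on the same side of the median. -/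
lemma abs_cdf_mul_sub_cdf_le_half {v : ℝ≥0} (hv : v ≠ 0) {r : ℝ} (hr : 0 ≤ r) (x : ℝ) :
    |cdf (gaussianReal 0 v) (r * x) - cdf (gaussianReal 0 v) x| ≤ 1 / 2 := by
  have median := cdf_gaussianReal_zero_apply_zero hv
  have mono := monotone_cdf (gaussianReal 0 v)
  rw [abs_sub_le_iff]
  rcases le_total 0 x with hx | hx
  · have h₁ := mono hx
    have h₂ := mono (mul_nonneg hr hx)
    constructor <;> linarith [cdf_le_one (gaussianReal 0 v) x,
      cdf_le_one (gaussianReal 0 v) (r * x)]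
  · have h₁ := mono hx
    have h₂ := mono (mul_nonpos_of_nonneg_of_nonpos hr hx)
    constructor <;> linarith [cdf_nonneg (gaussianReal 0 v) x,
      cdf_nonneg (gaussianReal 0 v) (r * x)]

lemma cdf_gaussianReal_zero_eq {v : ℝ≥0} (hv : v ≠ 0) (z : ℝ) :
    cdf (gaussianReal 0 v) z = cdf (gaussianReal 0 1) (z / √v) := by
  have hs : 0 < √(v : ℝ) := sqrt_pos.2 (NNReal.coe_pos.2 (pos_iff_ne_zero.2 hv))
  have h : gaussianReal 0 v = (gaussianReal 0 1).map (√v * ·) := by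
    rw [gaussianReal_map_const_mul, mul_zero, mul_one]
    congr
    exact NNReal.eq (sq_sqrt v.2).symm
  rw [cdf_eq_real, cdf_eq_real, h, map_measureReal_apply (measurable_const_mul _) measurableSet_Iic]
  congr 1
  ext x
  simp [le_div_iff₀' hs]

lemma dKol_gaussianReal_le (v : ℝ≥0) :
    dKol (gaussianReal 0 v) (gaussianReal 0 1) ≤ |(v : ℝ) - 1| := by
  rcases eq_or_ne v 0 with rfl | hv
  · simpa using dKol_le_one (μ := gaussianReal 0 0) (ν := gaussianReal 0 1)
  refine dKol_le_of_forall_cdf fun z => ?_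
  rw [cdf_gaussianReal_zero_eq hv]
  set s := √(v : ℝ)
  have hs : 0 < s := sqrt_pos.2 (NNReal.coe_pos.2 (pos_iff_ne_zero.2 hv))
  rw [show (v : ℝ) = s ^ 2 from (sq_sqrt v.2).symm]
  rcases le_total 1 s with h1s | hs1
  · have h := abs_cdf_mul_sub_cdf_le h1s (z / s)
    rw [mul_div_cancel₀ _ hs.ne', abs_sub_comm] at h
    exact h.trans (le_abs.2 (.inl (by nlinarith)))
  rw [div_eq_inv_mul]
  rcases le_total (s ^ 2) (1 / 2) with hs_small | hs_large
  · exact (abs_cdf_mul_sub_cdf_le_half one_ne_zero (inv_nonneg.2 hs.le) z).trans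
      (le_abs.2 (.inr (by linarith)))
  · refine (abs_cdf_mul_sub_cdf_le ((one_le_inv₀ hs).2 hs1) z).trans (le_abs.2 (.inr ?_))
    calc s⁻¹ - 1 = (1 - s) / s := by field_simp
      _ ≤ (1 - s) * (1 + s) := by
        rw [div_le_iff₀ hs, mul_assoc]
        exact le_mul_of_one_le_right (sub_nonneg.2 hs1) (by nlinarith)
      _ = -(s ^ 2 - 1) := by ring

end GaussianComparison

section GaussianMoments

lemma hasDerivAt_gaussianPDFReal_zero {v : ℝ≥0} (hv : v ≠ 0) (x : ℝ) :
    HasDerivAt (gaussianPDFReal 0 v) (-(x / v) * gaussianPDFReal 0 v x) x := by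
  have hv' : (v : ℝ) ≠ 0 := NNReal.coe_ne_zero.2 hv
  have exponent : HasDerivAt (fun y : ℝ => -(y - 0) ^ 2 / (2 * v)) (-(x / v)) x := by
    refine ((((hasDerivAt_id x).sub_const 0).pow 2).neg.div_const (2 * (v : ℝ))).congr_deriv ?_
    simp only [id, sub_zero, Nat.cast_ofNat, Nat.add_one_sub_one, pow_one]
    field_simp
  refine (exponent.exp.const_mul (√(2 * π * v))⁻¹).congr_deriv ?_
  rw [gaussianPDFReal]
  ring

lemma integrable_pow_of_memLp {α : Type*} [MeasurableSpace α] {μ : Measure α} [IsFiniteMeasure μ]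
    {f : α → ℝ} {n : ℕ} (hf : MemLp f n μ) : Integrable (fun x => f x ^ n) μ := by
  refine (integrable_norm_iff (hf.aestronglyMeasurable.pow n)).1 ?_
  simpa only [Pi.pow_apply, norm_pow] using hf.integrable_norm_pow'

lemma integrable_pow_gaussianReal (m : ℝ) (v : ℝ≥0) (n : ℕ) :
    Integrable (fun x => x ^ n) (gaussianReal m v) :=
  integrable_pow_of_memLp (memLp_id_gaussianReal n)

lemma integrable_pow_mul_gaussianPDFReal (m : ℝ) {v : ℝ≥0} (hv : v ≠ 0) (n : ℕ) :
    Integrable (fun x => x ^ n * gaussianPDFReal m v x) := by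
  have h := integrable_pow_gaussianReal m v n
  rw [gaussianReal_of_var_ne_zero m hv, integrable_withDensity_iff_integrable_smul'
    (measurable_gaussianPDF m v) (ae_of_all _ fun _ => gaussianPDF_lt_top)] at h
  simpa only [toReal_gaussianPDF, smul_eq_mul, mul_comm] using h

/-- Integration by parts (Stein's identity for a monomial). -/
lemma integral_pow_add_two_gaussianReal (v : ℝ≥0) (n : ℕ) :
    ∫ x, x ^ (n + 2) ∂gaussianReal 0 v = (n + 1) * v * ∫ x, x ^ n ∂gaussianReal 0 v := by
  rcases eq_or_ne v 0 with rfl | hv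
  · simp
  have hv' : (v : ℝ) ≠ 0 := NNReal.coe_ne_zero.2 hv
  have by_parts := integral_mul_deriv_eq_deriv_mul_of_integrable
    (u := fun x => x ^ (n + 1)) (u' := fun x => (n + 1) * x ^ n)
    (v := gaussianPDFReal 0 v) (v' := fun x => -(x / v) * gaussianPDFReal 0 v x)
    (fun x _ => by simpa using hasDerivAt_pow (n + 1) x)
    (fun x _ => hasDerivAt_gaussianPDFReal_zero hv x)
    (((integrable_pow_mul_gaussianPDFReal 0 hv (n + 2)).const_mul (-(v : ℝ)⁻¹)).congr
      (ae_of_all _ fun x => by simp only [Pi.mul_apply]; ring))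
    (((integrable_pow_mul_gaussianPDFReal 0 hv n).const_mul (n + 1 : ℝ)).congr
      (ae_of_all _ fun x => by simp only [Pi.mul_apply]; ring))
    (integrable_pow_mul_gaussianPDFReal 0 hv (n + 1))
  simp only [integral_gaussianReal_eq_integral_smul hv, smul_eq_mul]
  calc ∫ x, gaussianPDFReal 0 v x * x ^ (n + 2)
      = ∫ x, -v * (x ^ (n + 1) * (-(x / v) * gaussianPDFReal 0 v x)) := by
        congr 1 with x
        field_simp
        ring
    _ = v * ∫ x, (n + 1) * x ^ n * gaussianPDFReal 0 v x := by
        rw [integral_const_mul, by_parts, neg_mul_neg]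
    _ = (n + 1) * v * ∫ x, gaussianPDFReal 0 v x * x ^ n := by
        rw [← integral_const_mul, ← integral_const_mul]
        congr 1 with x
        ring

lemma integral_sq_gaussianReal (v : ℝ≥0) : ∫ x, x ^ 2 ∂gaussianReal 0 v = v := by
  simpa using integral_pow_add_two_gaussianReal v 0

lemma integral_pow_four_gaussianReal (v : ℝ≥0) :
    ∫ x, x ^ 4 ∂gaussianReal 0 v = 3 * (v : ℝ) ^ 2 := by
  rw [integral_pow_add_two_gaussianReal v 2, integral_sq_gaussianReal]
  push_cast
  ring

end GaussianMoments

section Isserlis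

variable {E : Type*} [NormedAddCommGroup E] [NormedSpace ℝ E] [MeasurableSpace E] [BorelSpace E]
  {μ : Measure E} [IsGaussian μ]

lemma memLp_two_dual_mul (L K : StrongDual ℝ E) : MemLp (fun x => L x * K x) 2 μ := by
  have : ENNReal.HolderTriple 4 4 2 := ⟨by
    rw [← ENNReal.toReal_eq_toReal_iff' (by simp) (by simp), ENNReal.toReal_add (by simp) (by simp)]
    norm_num⟩
  exact (IsGaussian.memLp_dual μ K 4 (by simp)).mul (IsGaussian.memLp_dual μ L 4 (by simp))

lemma integrable_dual_mul (L K : StrongDual ℝ E) : Integrable (fun x => L x * K x) μ :=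
  (memLp_two_dual_mul L K).integrable one_le_two

lemma integrable_dual_mul_mul (L₁ L₂ L₃ L₄ : StrongDual ℝ E) :
    Integrable (fun x => L₁ x * L₂ x * (L₃ x * L₄ x)) μ :=
  (memLp_two_dual_mul L₁ L₂).integrable_mul (memLp_two_dual_mul L₃ L₄)

variable [CompleteSpace E] [SecondCountableTopology E]

lemma map_dual_eq_gaussianReal (hμ : μ[id] = 0) (L : StrongDual ℝ E) :
    μ.map L = gaussianReal 0 (uncenteredCovarianceBilinDual μ L L).toNNReal := by
  have mean_zero : μ[L] = 0 := by rw [IsGaussian.integral_dual]; simpa using congrArg L hμ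
  rw [IsGaussian.map_eq_gaussianReal, mean_zero,
    variance_of_integral_eq_zero (by fun_prop) mean_zero,
    uncenteredCovarianceBilinDual_apply IsGaussian.memLp_two_id]
  simp only [sq]

lemma integral_dual_pow_four (hμ : μ[id] = 0) (L : StrongDual ℝ E) :
    ∫ x, L x ^ 4 ∂μ = 3 * uncenteredCovarianceBilinDual μ L L ^ 2 := by
  have nonneg : 0 ≤ uncenteredCovarianceBilinDual μ L L := by
    rw [uncenteredCovarianceBilinDual_apply IsGaussian.memLp_two_id]
    exact integral_nonneg fun x => mul_self_nonneg _
  rw [← integral_map (f := fun y : ℝ => y ^ 4) (by fun_prop) (by fun_prop),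
    map_dual_eq_gaussianReal hμ, integral_pow_four_gaussianReal, Real.coe_toNNReal _ nonneg]

lemma uncenteredCovarianceBilinDual_comm (L K : StrongDual ℝ E) :
    uncenteredCovarianceBilinDual μ L K = uncenteredCovarianceBilinDual μ K L := by
  simp only [uncenteredCovarianceBilinDual_apply IsGaussian.memLp_two_id, mul_comm]

lemma integral_dual_sq_mul_dual_sq (hμ : μ[id] = 0) (L K : StrongDual ℝ E) :
    ∫ x, L x ^ 2 * K x ^ 2 ∂μ =
      uncenteredCovarianceBilinDual μ L L * uncenteredCovarianceBilinDual μ K K +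
        2 * uncenteredCovarianceBilinDual μ L K ^ 2 := by
  have integrable (J : StrongDual ℝ E) : Integrable (fun x => J x ^ 4) μ := by
    simpa only [pow_succ, pow_zero, one_mul, mul_assoc] using integrable_dual_mul_mul J J J J
  have polarization : ∀ x, L x ^ 2 * K x ^ 2 =
      12⁻¹ * (((L + K) x ^ 4 + (L - K) x ^ 4) - 2 * (L x ^ 4 + K x ^ 4)) := fun x => by
    simp only [add_apply, sub_apply]
    ring
  simp only [polarization]
  rw [integral_const_mul, integral_sub ((integrable (L + K)).fun_add (integrable (L - K)))
      (((integrable L).fun_add (integrable K)).const_mul 2),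
    integral_add (integrable (L + K)) (integrable (L - K)), integral_const_mul,
    integral_add (integrable L) (integrable K)]
  simp only [integral_dual_pow_four hμ]
  simp only [map_add, map_sub, add_apply, sub_apply, uncenteredCovarianceBilinDual_comm K L]
  ring

lemma integral_dual_mul_mul (hμ : μ[id] = 0) (L₁ L₂ L₃ L₄ : StrongDual ℝ E) :
    ∫ x, L₁ x * L₂ x * (L₃ x * L₄ x) ∂μ =
      uncenteredCovarianceBilinDual μ L₁ L₂ * uncenteredCovarianceBilinDual μ L₃ L₄ +
      uncenteredCovarianceBilinDual μ L₁ L₃ * uncenteredCovarianceBilinDual μ L₂ L₄ +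
      uncenteredCovarianceBilinDual μ L₁ L₄ * uncenteredCovarianceBilinDual μ L₂ L₃ := by
  have integrable (J K : StrongDual ℝ E) : Integrable (fun x => J x ^ 2 * K x ^ 2) μ := by
    simpa only [sq] using integrable_dual_mul_mul J J K K
  have polarization : ∀ x, L₁ x * L₂ x * (L₃ x * L₄ x) = 16⁻¹ *
      (((L₁ + L₂) x ^ 2 * (L₃ + L₄) x ^ 2 + (L₁ - L₂) x ^ 2 * (L₃ - L₄) x ^ 2) -
        ((L₁ + L₂) x ^ 2 * (L₃ - L₄) x ^ 2 + (L₁ - L₂) x ^ 2 * (L₃ + L₄) x ^ 2)) := fun x => by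
    simp only [add_apply, sub_apply]
    ring
  have integral_add_eq (J K J' K' : StrongDual ℝ E) :
      ∫ x, (J x ^ 2 * K x ^ 2 + J' x ^ 2 * K' x ^ 2) ∂μ =
        ∫ x, J x ^ 2 * K x ^ 2 ∂μ + ∫ x, J' x ^ 2 * K' x ^ 2 ∂μ :=
    integral_add (integrable J K) (integrable J' K')
  simp only [polarization]
  rw [integral_const_mul,
    integral_sub ((integrable (L₁ + L₂) (L₃ + L₄)).fun_add (integrable (L₁ - L₂) (L₃ - L₄)))
      ((integrable (L₁ + L₂) (L₃ - L₄)).fun_add (integrable (L₁ - L₂) (L₃ + L₄))),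
    integral_add_eq, integral_add_eq]
  simp only [integral_dual_sq_mul_dual_sq hμ]
  simp only [map_add, map_sub, add_apply, sub_apply, uncenteredCovarianceBilinDual_comm L₂ L₁,
    uncenteredCovarianceBilinDual_comm L₄ L₃]
  ring

end Isserlis

section QuadraticForm

open Matrix

variable {ι : Type*}

/-- The matrix `(∫ xⱼ xₖ dμ)` of second moments of a measure on `ι → ℝ`; it is the covariance
matrix when `μ` is centered. -/
def secondMoment (μ : Measure (ι → ℝ)) : Matrix ι ι ℝ :=
  Matrix.of fun j k => ∫ x, x j * x k ∂μ

lemma isSymm_secondMoment (μ : Measure (ι → ℝ)) : (secondMoment μ).IsSymm :=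
  Matrix.ext fun j k => by simp only [secondMoment, transpose_apply, of_apply, mul_comm]

variable [Fintype ι]

/-- The linear functional `x ↦ a ⬝ᵥ x`, as an element of the dual to which the theory of Gaussian
measures on a Banach space applies. -/
def dotProductDual (a : ι → ℝ) : StrongDual ℝ (ι → ℝ) :=
  ∑ j, a j • ContinuousLinearMap.proj j

@[simp]
lemma dotProductDual_apply (a x : ι → ℝ) : dotProductDual a x = a ⬝ᵥ x := by
  simp [dotProductDual, dotProduct]

lemma dotProduct_mulVec_eq_sum_dotProductDual [DecidableEq ι] (A : Matrix ι ι ℝ) (y : ι → ℝ) :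
    y ⬝ᵥ A *ᵥ y = ∑ j, dotProductDual ((1 : Matrix ι ι ℝ) j) y * dotProductDual (A j) y := by
  have (j : ι) : (1 : Matrix ι ι ℝ) j ⬝ᵥ y = y j := congrFun (one_mulVec y) j
  simp only [dotProductDual_apply, this]
  rfl

variable {μ ν : Measure (ι → ℝ)} [IsGaussian μ] [IsGaussian ν]

lemma uncenteredCovarianceBilinDual_dotProductDual (a b : ι → ℝ) :
    uncenteredCovarianceBilinDual ν (dotProductDual a) (dotProductDual b) =
      a ⬝ᵥ secondMoment ν *ᵥ b := by
  simp only [dotProductDual, map_sum, map_smul, _root_.sum_apply, _root_.smul_apply, smul_eq_mul,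
    uncenteredCovarianceBilinDual_apply IsGaussian.memLp_two_id, ContinuousLinearMap.proj_apply,
    dotProduct, mulVec, secondMoment, of_apply, Finset.mul_sum]
  rw [Finset.sum_comm]
  exact Finset.sum_congr rfl fun j _ => Finset.sum_congr rfl fun k _ => by ring

lemma uncenteredCovarianceBilinDual_dotProductDual_row (A B : Matrix ι ι ℝ) (j l : ι) :
    uncenteredCovarianceBilinDual ν (dotProductDual (A j)) (dotProductDual (B l)) =
      (A * secondMoment ν * Bᵀ) j l := by
  rw [uncenteredCovarianceBilinDual_dotProductDual, Matrix.mul_assoc]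
  rfl

lemma map_dotProduct_eq_gaussianReal (hμ : μ[id] = 0) (y : ι → ℝ) :
    μ.map (fun x => x ⬝ᵥ y) = gaussianReal 0 (y ⬝ᵥ secondMoment μ *ᵥ y).toNNReal := by
  have : (fun x => x ⬝ᵥ y) = dotProductDual y := funext fun x => by simp [dotProduct_comm]
  rw [this, map_dual_eq_gaussianReal hμ, uncenteredCovarianceBilinDual_dotProductDual]

lemma dotProduct_secondMoment_mulVec_nonneg (y : ι → ℝ) : 0 ≤ y ⬝ᵥ secondMoment μ *ᵥ y := by
  rw [← uncenteredCovarianceBilinDual_dotProductDual,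
    uncenteredCovarianceBilinDual_apply IsGaussian.memLp_two_id]
  exact integral_nonneg fun x => mul_self_nonneg _

lemma memLp_two_dotProduct_mulVec (A : Matrix ι ι ℝ) : MemLp (fun y => y ⬝ᵥ A *ᵥ y) 2 ν := by
  classical
  simp only [dotProduct_mulVec_eq_sum_dotProductDual]
  exact memLp_finsetSum _ fun j _ => memLp_two_dual_mul _ _

variable {A : Matrix ι ι ℝ}

lemma integral_dotProduct_mulVec (hA : A.IsSymm) :
    ∫ y, y ⬝ᵥ A *ᵥ y ∂ν = (secondMoment ν * A).trace := by
  classical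
  simp only [dotProduct_mulVec_eq_sum_dotProductDual]
  rw [integral_finsetSum _ fun j _ => integrable_dual_mul _ _]
  refine Finset.sum_congr rfl fun j _ => ?_
  rw [← uncenteredCovarianceBilinDual_apply IsGaussian.memLp_two_id,
    uncenteredCovarianceBilinDual_dotProductDual_row, Matrix.one_mul, hA.eq, diag_apply]

lemma integral_dotProduct_mulVec_sq (hν : ν[id] = 0) (hA : A.IsSymm) :
    ∫ y, (y ⬝ᵥ A *ᵥ y) ^ 2 ∂ν =
      (secondMoment ν * A).trace ^ 2 + 2 * (secondMoment ν * A * (secondMoment ν * A)).trace := by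
  classical
  set S := secondMoment ν
  have hS : Sᵀ = S := isSymm_secondMoment ν
  have isserlis (j l : ι) : ∫ y, dotProductDual ((1 : Matrix ι ι ℝ) j) y * dotProductDual (A j) y *
      (dotProductDual ((1 : Matrix ι ι ℝ) l) y * dotProductDual (A l) y) ∂ν =
      (S * A) j j * (S * A) l l + S j l * (A * S * A) j l + (S * A) j l * (A * S) j l := by
    simp only [integral_dual_mul_mul hν, uncenteredCovarianceBilinDual_dotProductDual_row,
      Matrix.one_mul, Matrix.transpose_one, Matrix.mul_one, hA.eq, S]
  have trace_eq (M N : Matrix ι ι ℝ) : ∑ j, ∑ l, M j l * N j l = (M * Nᵀ).trace := rfl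
  simp only [dotProduct_mulVec_eq_sum_dotProductDual, sq, Finset.sum_mul_sum]
  rw [integral_finsetSum _ fun j _ => integrable_finsetSum _ fun l _ =>
    integrable_dual_mul_mul _ _ _ _]
  simp only [integral_finsetSum _ fun _ _ => integrable_dual_mul_mul _ _ _ _, isserlis,
    Finset.sum_add_distrib, trace_eq, transpose_mul, hS, hA.eq, ← Finset.sum_mul_sum]
  simp only [trace, diag_apply, Matrix.mul_assoc]
  ring

lemma integral_dotProduct_mulVec_sub_one_sq (hν : ν[id] = 0) (hA : A.IsSymm) :
    ∫ y, (y ⬝ᵥ A *ᵥ y - 1) ^ 2 ∂ν =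
      ((secondMoment ν * A).trace - 1) ^ 2 +
        2 * (secondMoment ν * A * (secondMoment ν * A)).trace := by
  have memLp := memLp_two_dotProduct_mulVec (ν := ν) A
  have expand (y : ι → ℝ) :
      (y ⬝ᵥ A *ᵥ y - 1) ^ 2 = (y ⬝ᵥ A *ᵥ y) ^ 2 - 2 * (y ⬝ᵥ A *ᵥ y) + 1 := by ring
  simp only [expand]
  rw [integral_add (memLp.integrable_sq.sub' ((memLp.integrable one_le_two).const_mul 2))
      (integrable_const 1),
    integral_sub memLp.integrable_sq ((memLp.integrable one_le_two).const_mul 2),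
    integral_const_mul, integral_dotProduct_mulVec_sq hν hA, integral_dotProduct_mulVec hA]
  simp only [integral_const, probReal_univ, smul_eq_mul, mul_one]
  ring

end QuadraticForm

section Mixture

lemma dKol_map_prod_le {α β : Type*} [MeasurableSpace α] [MeasurableSpace β] {μ : Measure α}
    {ν : Measure β} [IsProbabilityMeasure μ] [IsProbabilityMeasure ν] {ρ : Measure ℝ}
    [IsProbabilityMeasure ρ] {f : α × β → ℝ} (hf : Measurable f) {b : β → ℝ} (hb : Integrable b ν)
    (h : ∀ y, dKol (μ.map fun x => f (x, y)) ρ ≤ b y) :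
    dKol ((μ.prod ν).map f) ρ ≤ ∫ y, b y ∂ν := by
  have hf_left (y : β) : Measurable fun x => f (x, y) := hf.comp measurable_prodMk_right
  have (y : β) : IsProbabilityMeasure (μ.map fun x => f (x, y)) :=
    Measure.isProbabilityMeasure_map (hf_left y).aemeasurable
  have : IsProbabilityMeasure ((μ.prod ν).map f) :=
    Measure.isProbabilityMeasure_map hf.aemeasurable
  refine dKol_le_of_forall_cdf fun z => ?_
  have hA : MeasurableSet (f ⁻¹' Set.Iic z) := hf measurableSet_Iic
  have measurable_cdf : Measurable fun y => cdf (μ.map fun x => f (x, y)) z := by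
    simp only [cdf_eq_real, map_measureReal_apply (hf_left _) measurableSet_Iic]
    exact (measurable_measure_prodMk_right hA).ennreal_toReal
  have integrable_cdf : Integrable (fun y => cdf (μ.map fun x => f (x, y)) z) ν :=
    .of_bound measurable_cdf.aestronglyMeasurable 1 <| .of_forall fun y => by
      rw [norm_of_nonneg (cdf_nonneg _ z)]
      exact cdf_le_one _ z
  have fubini : cdf ((μ.prod ν).map f) z = ∫ y, cdf (μ.map fun x => f (x, y)) z ∂ν := by
    simp only [cdf_eq_real, map_measureReal_apply hf measurableSet_Iic,
      map_measureReal_apply (hf_left _) measurableSet_Iic, measureReal_def]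
    rw [Measure.prod_apply_symm hA]
    exact (integral_toReal (measurable_measure_prodMk_right hA).aemeasurable
      (.of_forall fun y => measure_lt_top μ _)).symm
  calc |cdf ((μ.prod ν).map f) z - cdf ρ z|
      = |∫ y, (cdf (μ.map fun x => f (x, y)) z - cdf ρ z) ∂ν| := by
        rw [integral_sub integrable_cdf (integrable_const _), fubini, integral_const, probReal_univ,
          one_smul]
    _ ≤ ∫ y, |cdf (μ.map fun x => f (x, y)) z - cdf ρ z| ∂ν := abs_integral_le_integral_abs
    _ ≤ ∫ y, b y ∂ν := integral_mono (integrable_cdf.sub (integrable_const _)).abs hb fun y =>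
        (abs_cdf_sub_cdf_le_dKol z).trans (h y)

lemma integral_abs_le_sqrt_integral_sq {α : Type*} [MeasurableSpace α] {μ : Measure α}
    [IsProbabilityMeasure μ] {f : α → ℝ} (hf : MemLp f 2 μ) :
    ∫ x, |f x| ∂μ ≤ √(∫ x, f x ^ 2 ∂μ) := by
  have h := variance_nonneg |f| μ
  rw [variance_eq_sub hf.abs] at h
  simp only [Pi.pow_apply, Pi.abs_apply, sq_abs] at h
  exact le_sqrt_of_sq_le (sub_nonneg.1 h)

open Matrix in
/-- Conditionally on `p.2`, the variable `p.1 ⬝ᵥ p.2` is centered Gaussian; its conditional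
variance is a quadratic form in `p.2`. -/
lemma dKol_map_prod_dotProduct_le {ι : Type*} [Fintype ι] {μ ν : Measure (ι → ℝ)} [IsGaussian μ]
    [IsGaussian ν] (hμ : μ[id] = 0) (hν : ν[id] = 0) :
    dKol ((μ.prod ν).map fun p => p.1 ⬝ᵥ p.2) (gaussianReal 0 1) ≤
      √(((secondMoment ν * secondMoment μ).trace - 1) ^ 2 +
        2 * (secondMoment ν * secondMoment μ * (secondMoment ν * secondMoment μ)).trace) := by
  have memLp : MemLp (fun y => y ⬝ᵥ secondMoment μ *ᵥ y - 1) 2 ν :=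
    (memLp_two_dotProduct_mulVec _).sub (memLp_const 1)
  have measurable_dotProduct : Measurable fun p : (ι → ℝ) × (ι → ℝ) => p.1 ⬝ᵥ p.2 := by
    unfold dotProduct
    fun_prop
  rw [← integral_dotProduct_mulVec_sub_one_sq hν (isSymm_secondMoment μ)]
  refine (dKol_map_prod_le measurable_dotProduct (memLp.integrable one_le_two).abs
    fun y => ?_).trans (integral_abs_le_sqrt_integral_sq memLp)
  rw [map_dotProduct_eq_gaussianReal hμ]
  simpa only [Real.coe_toNNReal _ (dotProduct_secondMoment_mulVec_nonneg y)] using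
    dKol_gaussianReal_le (y ⬝ᵥ secondMoment μ *ᵥ y).toNNReal

end Mixture

section NonnegMatrix

variable {ι : Type*} [Fintype ι] {A B : Matrix ι ι ℝ} {M a b : ℝ}

lemma matrix_mul_apply_nonneg (hA : ∀ j k, 0 ≤ A j k) (hB : ∀ j k, 0 ≤ B j k) (j k : ι) :
    0 ≤ (A * B) j k :=
  Finset.sum_nonneg fun l _ => mul_nonneg (hA j l) (hB l k)

lemma matrix_mul_apply_le (hA : ∀ j k, 0 ≤ A j k) (hB : ∀ j k, B j k ≤ M) (j k : ι) :
    (A * B) j k ≤ (∑ l, A j l) * M := by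
  rw [Matrix.mul_apply, Finset.sum_mul]
  exact Finset.sum_le_sum fun l _ => mul_le_mul_of_nonneg_left (hB l k) (hA j l)

lemma sum_matrix_mul_apply_le (hA : ∀ j k, 0 ≤ A j k) (hb : 0 ≤ b) (hAa : ∀ j, ∑ k, A j k ≤ a)
    (hBb : ∀ j, ∑ k, B j k ≤ b) (j : ι) : ∑ k, (A * B) j k ≤ a * b :=
  calc ∑ k, (A * B) j k = ∑ l, A j l * ∑ k, B l k := by
        simp only [Matrix.mul_apply, Finset.mul_sum]
        exact Finset.sum_comm
    _ ≤ ∑ l, A j l * b := Finset.sum_le_sum fun l _ => mul_le_mul_of_nonneg_left (hBb l) (hA j l)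
    _ = (∑ l, A j l) * b := (Finset.sum_mul ..).symm
    _ ≤ a * b := mul_le_mul_of_nonneg_right (hAa j) hb

lemma trace_mul_mul_mul_self_le (hA : ∀ j k, 0 ≤ A j k) (hM : 0 ≤ M) (hAM : ∀ j k, A j k ≤ M)
    (ha : 0 ≤ a) (hAa : ∀ j, ∑ k, A j k ≤ a) :
    (A * A * (A * A)).trace ≤ Fintype.card ι * (a ^ 3 * M) := by
  have hA₃ := matrix_mul_apply_nonneg (matrix_mul_apply_nonneg hA hA) hA
  have row_sum := sum_matrix_mul_apply_le (matrix_mul_apply_nonneg hA hA) ha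
    (sum_matrix_mul_apply_le hA ha hAa hAa) hAa
  calc (A * A * (A * A)).trace = ∑ j, (A * A * A * A) j j := by
        simp only [Matrix.trace, Matrix.diag_apply, Matrix.mul_assoc]
    _ ≤ ∑ _j : ι, a ^ 3 * M := Finset.sum_le_sum fun j _ =>
        (matrix_mul_apply_le hA₃ hAM j j).trans <|
          mul_le_mul_of_nonneg_right ((row_sum j).trans_eq (by ring)) hM
    _ = Fintype.card ι * (a ^ 3 * M) := by rw [Finset.sum_const, nsmul_eq_mul, Finset.card_univ]

end NonnegMatrix

section GeometricCovariance

variable {q : ℝ} {j n : ℕ}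

lemma one_sub_mul_sum_pow_dist (q : ℝ) (hj : j < n) :
    (1 - q) * ∑ k ∈ range n, q ^ Nat.dist j k = 1 + q - q ^ (j + 1) - q ^ (n - j) := by
  induction n, hj using Nat.le_induction with
  | base =>
    have reflect : ∑ k ∈ range (j + 1), q ^ Nat.dist j k = ∑ k ∈ range (j + 1), q ^ k := by
      rw [← Finset.sum_range_reflect]
      refine Finset.sum_congr rfl fun k hk => ?_
      rw [Finset.mem_range] at hk
      congr 1
      unfold Nat.dist
      lia
    rw [Nat.succ_eq_add_one, reflect, mul_neg_geom_sum, Nat.add_sub_cancel_left]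
    ring
  | succ n hn ih =>
    have dist_eq : Nat.dist j n = n - j := Nat.dist_eq_sub_of_le (by lia)
    rw [Finset.sum_range_succ, mul_add, ih, dist_eq, Nat.sub_add_comm (by lia), pow_succ]
    ring

lemma sum_pow_dist_eq (hq : q ≠ 1) (hj : j < n) :
    ∑ k ∈ range n, q ^ Nat.dist j k =
      (1 + q) / (1 - q) - (q ^ (j + 1) + q ^ (n - j)) / (1 - q) := by
  rw [← sub_div, eq_div_iff (sub_ne_zero.2 hq.symm), mul_comm, one_sub_mul_sum_pow_dist q hj]
  ring

lemma sum_pow_dist_le (hq : 0 ≤ q) (hq1 : q < 1) (hj : j < n) :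
    ∑ k ∈ range n, q ^ Nat.dist j k ≤ (1 + q) / (1 - q) := by
  rw [sum_pow_dist_eq hq1.ne hj]
  exact sub_le_self _ (div_nonneg (by positivity) (sub_nonneg.2 hq1.le))

lemma geom_sum_le (hq : 0 ≤ q) (hq1 : q < 1) (n : ℕ) : ∑ k ∈ range n, q ^ k ≤ 1 / (1 - q) := by
  rw [one_div, ← tsum_geometric_of_lt_one hq hq1]
  exact (summable_geometric_of_lt_one hq hq1).sum_le_tsum _ fun k _ => pow_nonneg hq k

lemma le_sum_sum_pow_dist (hq : 0 ≤ q) (hq1 : q < 1) (n : ℕ) :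
    n * ((1 + q) / (1 - q)) - 2 * q / (1 - q) ^ 2 ≤
      ∑ j ∈ range n, ∑ k ∈ range n, q ^ Nat.dist j k := by
  have hpos : 0 < 1 - q := sub_pos.2 hq1
  have boundary_left : ∑ j ∈ range n, q ^ (j + 1) ≤ q / (1 - q) := by
    simpa only [pow_succ', ← Finset.mul_sum, mul_one_div] using
      mul_le_mul_of_nonneg_left (geom_sum_le hq hq1 n) hq
  have boundary_right : ∑ j ∈ range n, q ^ (n - j) = ∑ j ∈ range n, q ^ (j + 1) := by
    rw [← Finset.sum_range_reflect]
    refine Finset.sum_congr rfl fun j hj => ?_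
    rw [Finset.mem_range] at hj
    congr 1
    lia
  rw [Finset.sum_congr rfl fun j hj => sum_pow_dist_eq hq1.ne (Finset.mem_range.1 hj),
    Finset.sum_sub_distrib, Finset.sum_const, card_range, nsmul_eq_mul, ← Finset.sum_div,
    Finset.sum_add_distrib, boundary_right]
  refine sub_le_sub_left ?_ _
  calc (∑ j ∈ range n, q ^ (j + 1) + ∑ j ∈ range n, q ^ (j + 1)) / (1 - q)
      ≤ (q / (1 - q) + q / (1 - q)) / (1 - q) := by gcongr
    _ = 2 * q / (1 - q) ^ 2 := by field_simp; ring

lemma sum_sum_pow_add_le (hq : 0 ≤ q) (hq1 : q < 1) (n : ℕ) :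
    ∑ j ∈ range n, ∑ k ∈ range n, q ^ (j + k) ≤ 1 / (1 - q) ^ 2 := by
  simp only [pow_add, ← Finset.sum_mul_sum]
  calc (∑ j ∈ range n, q ^ j) * ∑ k ∈ range n, q ^ k
      ≤ 1 / (1 - q) * (1 / (1 - q)) :=
        mul_self_le_mul_self (Finset.sum_nonneg fun k _ => pow_nonneg hq k) (geom_sum_le hq hq1 n)
    _ = 1 / (1 - q) ^ 2 := by rw [div_mul_div_comm, one_mul, sq]

/-- The matrix `q ^ |j - k| - q ^ (j + k)`: with `q = e^{-θh}`, the covariance matrix of an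
Ornstein–Uhlenbeck process started at `0` and observed at the times `0, h, …, (n - 1)h`, up to the
factor `1 / (2θ)`. -/
def geomCov (q : ℝ) (n : ℕ) : Matrix (Fin n) (Fin n) ℝ :=
  Matrix.of fun j k => q ^ Nat.dist j k - q ^ (j + k : ℕ)

lemma geomCov_nonneg (hq : 0 ≤ q) (hq1 : q ≤ 1) (j k : Fin n) : 0 ≤ geomCov q n j k :=
  sub_nonneg.2 <| pow_le_pow_of_le_one hq hq1 (by unfold Nat.dist; lia)

lemma geomCov_le_pow_dist (hq : 0 ≤ q) (j k : Fin n) : geomCov q n j k ≤ q ^ Nat.dist j k :=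
  sub_le_self _ (pow_nonneg hq _)

lemma geomCov_le_one (hq : 0 ≤ q) (hq1 : q ≤ 1) (j k : Fin n) : geomCov q n j k ≤ 1 :=
  (geomCov_le_pow_dist hq j k).trans (pow_le_one₀ hq hq1)

lemma sum_geomCov_le (hq : 0 ≤ q) (hq1 : q < 1) (j : Fin n) :
    ∑ k, geomCov q n j k ≤ (1 + q) / (1 - q) :=
  calc ∑ k, geomCov q n j k ≤ ∑ k : Fin n, q ^ Nat.dist j k :=
        Finset.sum_le_sum fun k _ => geomCov_le_pow_dist hq j k
    _ = ∑ k ∈ range n, q ^ Nat.dist j k := Fin.sum_univ_eq_sum_range (fun k => q ^ Nat.dist j k) n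
    _ ≤ (1 + q) / (1 - q) := sum_pow_dist_le hq hq1 j.2

lemma trace_geomCov_mul_self (q : ℝ) (n : ℕ) :
    (geomCov q n * geomCov q n).trace =
      ∑ j ∈ range n, ∑ k ∈ range n, (q ^ Nat.dist j k - q ^ (j + k)) ^ 2 := by
  simp only [Finset.sum_range, Matrix.trace, Matrix.diag_apply, Matrix.mul_apply, geomCov,
    Matrix.of_apply, Nat.dist_comm, add_comm, sq]

lemma trace_geomCov_mul_self_le (hq : 0 ≤ q) (hq1 : q < 1) (n : ℕ) :
    (geomCov q n * geomCov q n).trace ≤ n * ((1 + q ^ 2) / (1 - q ^ 2)) := by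
  have sq_le (j k : ℕ) : (q ^ Nat.dist j k - q ^ (j + k)) ^ 2 ≤ (q ^ 2) ^ Nat.dist j k := by
    rw [← pow_mul, mul_comm 2, pow_mul]
    exact pow_le_pow_left₀
      (sub_nonneg.2 <| pow_le_pow_of_le_one hq hq1.le (by unfold Nat.dist; lia))
      (sub_le_self _ (pow_nonneg hq _)) 2
  rw [trace_geomCov_mul_self]
  calc _ ≤ ∑ j ∈ range n, ∑ k ∈ range n, (q ^ 2) ^ Nat.dist j k :=
        Finset.sum_le_sum fun j _ => Finset.sum_le_sum fun k _ => sq_le j k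
    _ ≤ ∑ _j ∈ range n, (1 + q ^ 2) / (1 - q ^ 2) := Finset.sum_le_sum fun j hj =>
        sum_pow_dist_le (sq_nonneg q) (pow_lt_one₀ hq hq1 two_ne_zero) (Finset.mem_range.1 hj)
    _ = n * ((1 + q ^ 2) / (1 - q ^ 2)) := by rw [Finset.sum_const, card_range, nsmul_eq_mul]

lemma le_trace_geomCov_mul_self (hq : 0 ≤ q) (hq1 : q < 1) (n : ℕ) :
    n * ((1 + q ^ 2) / (1 - q ^ 2)) - (2 * q ^ 2 / (1 - q ^ 2) ^ 2 + 2 / (1 - q) ^ 2) ≤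
      (geomCov q n * geomCov q n).trace := by
  have le_sq (j k : ℕ) : (q ^ 2) ^ Nat.dist j k - 2 * q ^ (j + k) ≤
      (q ^ Nat.dist j k - q ^ (j + k)) ^ 2 := by
    rw [← pow_mul, mul_comm 2, pow_mul]
    have : q ^ Nat.dist j k * q ^ (j + k) ≤ q ^ (j + k) :=
      mul_le_of_le_one_left (pow_nonneg hq _) (pow_le_one₀ hq hq1.le)
    nlinarith [sq_nonneg (q ^ (j + k))]
  have diagonal := le_sum_sum_pow_dist (sq_nonneg q) (pow_lt_one₀ hq hq1 two_ne_zero) n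
  have corner := sum_sum_pow_add_le hq hq1 n
  rw [trace_geomCov_mul_self]
  refine le_trans ?_ (Finset.sum_le_sum fun j _ => Finset.sum_le_sum fun k _ => le_sq j k)
  simp only [Finset.sum_sub_distrib, ← Finset.mul_sum]
  linarith [show 2 / (1 - q) ^ 2 = 2 * (1 / (1 - q) ^ 2) by ring]

lemma trace_geomCov_pow_four_le (hq : 0 ≤ q) (hq1 : q < 1) (n : ℕ) :
    (geomCov q n * geomCov q n * (geomCov q n * geomCov q n)).trace ≤
      n * ((1 + q) / (1 - q)) ^ 3 := by
  simpa using trace_mul_mul_mul_self_le (geomCov_nonneg hq hq1.le) zero_le_one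
    (geomCov_le_one hq hq1.le) (div_nonneg (by linarith) (sub_nonneg.2 hq1.le))
    (sum_geomCov_le hq hq1 (n := n))

end GeometricCovariance

section SmallStep

variable {x : ℝ} {n : ℕ}

lemma one_sub_exp_neg_pos (hx : 0 < x) : 0 < 1 - rexp (-x) := by
  simpa using hx

lemma one_le_div_one_sub_exp_neg (hx : 0 < x) : 1 ≤ x / (1 - rexp (-x)) := by
  rw [one_le_div (one_sub_exp_neg_pos hx)]
  linarith [add_one_le_exp (-x)]

lemma div_one_sub_exp_neg_le (hx : 0 < x) : x / (1 - rexp (-x)) ≤ 1 + x := by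
  rw [div_le_iff₀ (one_sub_exp_neg_pos hx)]
  have : (1 + x) * rexp (-x) ≤ rexp x * rexp (-x) :=
    mul_le_mul_of_nonneg_right (by linarith [add_one_le_exp x]) (exp_pos _).le
  rw [← exp_add, add_neg_cancel, exp_zero] at this
  linarith

lemma abs_mul_coth_sub_one_le (hx : 0 < x) :
    |x * ((1 + rexp (-x) ^ 2) / (1 - rexp (-x) ^ 2)) - 1| ≤ x := by
  have h2x : 0 < 2 * x := by positivity
  have split : x * ((1 + rexp (-(2 * x))) / (1 - rexp (-(2 * x)))) =
      2 * x / (1 - rexp (-(2 * x))) - x := by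
    have hne := (one_sub_exp_neg_pos h2x).ne'
    generalize rexp (-(2 * x)) = p at hne ⊢
    field_simp
    ring
  rw [← exp_nat_mul, Nat.cast_ofNat, mul_neg, split, abs_sub_le_iff]
  constructor <;> linarith [one_le_div_one_sub_exp_neg h2x, div_one_sub_exp_neg_le h2x]

lemma sq_mul_boundary_le (hx : 0 < x) :
    x ^ 2 * (2 * rexp (-x) ^ 2 / (1 - rexp (-x) ^ 2) ^ 2 + 2 / (1 - rexp (-x)) ^ 2) ≤
      5 / 2 * (1 + 2 * x) ^ 2 := by
  have h2x : 0 < 2 * x := by positivity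
  have hq : rexp (-(2 * x)) ≤ 1 := exp_le_one_iff.2 (by linarith)
  rw [← exp_nat_mul, Nat.cast_ofNat, mul_neg]
  calc _ = rexp (-(2 * x)) / 2 * (2 * x / (1 - rexp (-(2 * x)))) ^ 2 +
          2 * (x / (1 - rexp (-x))) ^ 2 := by
        generalize 1 - rexp (-(2 * x)) = d, 1 - rexp (-x) = d'
        ring
    _ ≤ 1 / 2 * (1 + 2 * x) ^ 2 + 2 * (1 + 2 * x) ^ 2 := by
        have := one_sub_exp_neg_pos hx
        have := one_sub_exp_neg_pos h2x
        gcongr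
        · exact div_one_sub_exp_neg_le h2x
        · exact (div_one_sub_exp_neg_le hx).trans (by linarith)
    _ = 5 / 2 * (1 + 2 * x) ^ 2 := by ring

lemma abs_trace_geomCov_sub_one_le (hx : 0 < x) (hn : n ≠ 0) :
    |x / n * (geomCov (rexp (-x)) n * geomCov (rexp (-x)) n).trace - 1| ≤
      x + 5 / 2 * (1 + 2 * x) ^ 2 / (n * x) := by
  have hn' : (0 : ℝ) < n := Nat.cast_pos.2 hn.bot_lt
  have hq : rexp (-x) < 1 := Real.exp_lt_one_iff.2 (neg_lt_zero.2 hx)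
  have main := abs_le.1 (abs_mul_coth_sub_one_le hx)
  have boundary := div_le_div_of_nonneg_right (sq_mul_boundary_le hx) (mul_pos hn' hx).le
  have boundary_nonneg : 0 ≤ 5 / 2 * (1 + 2 * x) ^ 2 / (n * x) := by positivity
  have upper := mul_le_mul_of_nonneg_left
    (trace_geomCov_mul_self_le (exp_pos (-x)).le hq n) (div_pos hx hn').le
  have lower := mul_le_mul_of_nonneg_left
    (le_trace_geomCov_mul_self (exp_pos (-x)).le hq n) (div_pos hx hn').le
  rw [mul_sub] at lower
  rw [← mul_assoc, div_mul_cancel₀ _ hn'.ne'] at upper lower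
  have boundary_eq (b : ℝ) : x / n * b = x ^ 2 * b / (n * x) := by field_simp
  rw [boundary_eq] at lower
  rw [abs_le]
  constructor <;> linarith

lemma trace_geomCov_pow_four_scaled_le (hx : 0 < x) (hn : n ≠ 0) :
    (x / n) ^ 2 * (geomCov (rexp (-x)) n * geomCov (rexp (-x)) n *
      (geomCov (rexp (-x)) n * geomCov (rexp (-x)) n)).trace ≤ (2 + x) ^ 3 / (n * x) := by
  have : (0 : ℝ) < n := Nat.cast_pos.2 hn.bot_lt
  have hq : rexp (-x) < 1 := Real.exp_lt_one_iff.2 (neg_lt_zero.2 hx)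
  have hpos := one_sub_exp_neg_pos hx
  have row_sum : x * ((1 + rexp (-x)) / (1 - rexp (-x))) ≤ 2 + x := by
    have : x * ((1 + rexp (-x)) / (1 - rexp (-x))) = 2 * (x / (1 - rexp (-x))) - x := by
      field_simp
      ring
    linarith [div_one_sub_exp_neg_le hx]
  calc _ ≤ (x / n) ^ 2 * (n * ((1 + rexp (-x)) / (1 - rexp (-x))) ^ 3) := by
        gcongr
        exact trace_geomCov_pow_four_le (exp_pos _).le hq n
    _ = (x * ((1 + rexp (-x)) / (1 - rexp (-x)))) ^ 3 / (n * x) := by field_simp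
    _ ≤ (2 + x) ^ 3 / (n * x) := by gcongr

end SmallStep

section RiemannSum

variable {E : Type*} [NormedAddCommGroup E] [NormedSpace ℝ E] [CompleteSpace E] {f : ℝ → E}

lemma norm_smul_sub_integral_le {a b ε : ℝ} (hab : a ≤ b) (hf : ContinuousOn f (Set.Icc a b))
    (hε : ∀ x ∈ Set.Icc a b, ‖f a - f x‖ ≤ ε) :
    ‖(b - a) • f a - ∫ x in a..b, f x‖ ≤ ε * (b - a) := by
  rw [← intervalIntegral.integral_const, ← intervalIntegral.integral_sub intervalIntegrable_const
    (hf.intervalIntegrable_of_Icc hab), ← abs_of_nonneg (sub_nonneg.2 hab)]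
  refine intervalIntegral.norm_integral_le_of_norm_le_const fun x hx => hε x ?_
  rw [Set.uIoc_of_le hab] at hx
  exact Set.Ioc_subset_Icc_self hx

lemma norm_riemannSum_sub_integral_le {h ε : ℝ} {n : ℕ} (hh : 0 ≤ h)
    (hf : ContinuousOn f (Set.Icc 0 (n * h)))
    (hε : ∀ x ∈ Set.Icc 0 (n * h), ∀ y ∈ Set.Icc 0 (n * h), |x - y| ≤ h → ‖f x - f y‖ ≤ ε) :
    ‖h • ∑ k ∈ range n, f (k * h) - ∫ x in 0..n * h, f x‖ ≤ ε * (n * h) := by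
  have mono (k : ℕ) : (k : ℝ) * h ≤ (k + 1 : ℕ) * h := by gcongr; simp
  have subset {k : ℕ} (hk : k < n) :
      Set.Icc ((k : ℝ) * h) ((k + 1 : ℕ) * h) ⊆ Set.Icc 0 (n * h) :=
    Set.Icc_subset_Icc (by positivity) (by gcongr; lia)
  have length (k : ℕ) : ((k + 1 : ℕ) : ℝ) * h - k * h = h := by push_cast; ring
  have split := intervalIntegral.sum_integral_adjacent_intervals (μ := volume)
    (a := fun k : ℕ => (k : ℝ) * h) fun k hk =>
      (hf.mono (subset hk)).intervalIntegrable_of_Icc (mono k)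
  simp only [Nat.cast_zero, zero_mul] at split
  rw [← split, Finset.smul_sum, ← Finset.sum_sub_distrib]
  calc _ ≤ ∑ _k ∈ range n, ε * h := norm_sum_le_of_le _ fun k hk => by
        have hk := subset (Finset.mem_range.1 hk)
        have := norm_smul_sub_integral_le (mono k) (hf.mono hk) fun x hx =>
          hε _ (hk (Set.left_mem_Icc.2 (mono k))) x (hk hx) (by
            rw [abs_sub_comm, abs_of_nonneg (sub_nonneg.2 hx.1)]
            linarith [hx.2, length k])
        rwa [length] at this
    _ = ε * (n * h) := by rw [Finset.sum_const, card_range, nsmul_eq_mul]; ring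

lemma tendsto_riemannSum {T : ℝ} (hT : 0 < T) (hf : ContinuousOn f (Set.Icc 0 T)) :
    Tendsto (fun n : ℕ => (T / n) • ∑ k ∈ range n, f (k * (T / n))) atTop
      (𝓝 (∫ x in 0..T, f x)) := by
  rw [Metric.tendsto_nhds]
  intro ε hε
  obtain ⟨δ, hδ, modulus⟩ := Metric.uniformContinuousOn_iff_le.1
    (isCompact_Icc.uniformContinuousOn_of_continuous hf) (ε / (2 * T)) (by positivity)
  filter_upwards [(tendsto_const_div_atTop_nhds_zero_nat T).eventually_le_const hδ,
    eventually_ne_atTop 0] with n hn hn0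
  have hnT : n * (T / n) = T := mul_div_cancel₀ T (Nat.cast_ne_zero.2 hn0)
  have bound := norm_riemannSum_sub_integral_le (f := f) (n := n) (h := T / n) (ε := ε / (2 * T))
    (by positivity) (by rwa [hnT]) fun x hx y hy hxy => by
      rw [hnT] at hx hy
      simpa only [dist_eq_norm] using modulus x hx y hy (hxy.trans hn)
  rw [hnT] at bound
  rw [dist_eq_norm]
  calc _ ≤ ε / (2 * T) * T := bound
    _ = ε / 2 := by field_simp
    _ < ε := half_lt_self hε

end RiemannSum

section OrnsteinUhlenbeck

variable {θ : ℝ} {X : Fin 2 → ℝ → Ω → ℝ}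

/-- The random vector `(a Xᵢ(jΔ))_{j < n}` of scaled observations of `Xᵢ` along a grid. -/
def ouGrid (X : Fin 2 → ℝ → Ω → ℝ) (i : Fin 2) (a Δ : ℝ) (n : ℕ) (ω : Ω) : Fin n → ℝ :=
  fun j => a * X i (j * Δ) ω

omit [MeasureSpace Ω] in
lemma mul_ouA_eq_dotProduct_ouGrid (c Δ : ℝ) (n : ℕ) (ω : Ω) :
    c * ouA X n Δ ω =
      ouGrid X 0 (c * (√(n * Δ) / n)) Δ n ω ⬝ᵥ ouGrid X 1 1 Δ n ω := by
  rw [ouA, Finset.sum_range, ← mul_assoc, Finset.mul_sum]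
  exact Finset.sum_congr rfl fun j _ => by rw [ouGrid, ouGrid]; ring

lemma exp_sub_exp_eq_geomCov (θ : ℝ) {Δ : ℝ} (hΔ : 0 ≤ Δ) {n : ℕ} (j k : Fin n) :
    rexp (-θ * |k * Δ - j * Δ|) - rexp (-θ * (k * Δ + j * Δ)) =
      geomCov (rexp (-(θ * Δ))) n j k := by
  have abs_sub_eq_dist : |(k : ℝ) * Δ - j * Δ| = Nat.dist j k * Δ := by
    rw [← sub_mul, abs_mul, abs_of_nonneg hΔ]
    rcases le_total (j : ℕ) k with h | h
    · rw [Nat.dist_eq_sub_of_le h, Nat.cast_sub h, abs_of_nonneg (by simpa using h)]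
    · rw [Nat.dist_eq_sub_of_le_right h, Nat.cast_sub h, abs_of_nonpos (by simpa using h), neg_sub]
  simp only [geomCov, Matrix.of_apply, ← Real.exp_nat_mul, abs_sub_eq_dist]
  congr 2 <;> push_cast <;> ring

lemma sq_add_sixteen_div_le {θ T : ℝ} (hθ : 0 < θ) (hT : 0 < T)
    (h : (2 + 7 / (4 * θ)) ^ 2 + 27 / (4 * θ) ≤ T) :
    (5 / 2 / (θ * T)) ^ 2 + 16 / (θ * T) ≤ ((2 + 7 / (4 * θ)) ^ 2 + 27 / (4 * θ)) / T := by
  set C := (2 + 7 / (4 * θ)) ^ 2 + 27 / (4 * θ) with hC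
  have theta_mul_C : θ * C = 83 / 4 + (2 * θ - 7 / 4) ^ 2 / θ := by rw [hC]; field_simp; ring
  have theta_mul_C_ge : 83 / 4 ≤ θ * C := by
    rw [theta_mul_C]
    exact le_add_of_nonneg_right (by positivity)
  have horizon_ge : 83 / 4 ≤ θ * T := theta_mul_C_ge.trans (by gcongr)
  calc (5 / 2 / (θ * T)) ^ 2 + 16 / (θ * T) = (25 / 4 / (θ * T) + 16) / (θ * T) := by
        field_simp; ring
    _ ≤ (25 / 4 / (83 / 4) + 16) / (θ * T) := by gcongr
    _ ≤ θ * C / (θ * T) := by gcongr; linarith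
    _ = C / T := mul_div_mul_left C T hθ.ne'

namespace IsOUPair

lemma measurable_ouGrid (hX : IsOUPair θ X) (i : Fin 2) (a Δ : ℝ) (n : ℕ) :
    Measurable (ouGrid X i a Δ n) :=
  measurable_pi_lambda _ fun _ => (hX.meas i _).const_mul a

lemma measurable_ouA (hX : IsOUPair θ X) (n : ℕ) (Δ : ℝ) : Measurable (ouA X n Δ) :=
  (Finset.measurable_fun_sum _ fun _ _ => (hX.meas 0 _).mul (hX.meas 1 _)).const_mul _

lemma exists_map_dual_ouGrid (hX : IsOUPair θ X) (i : Fin 2) (a : ℝ) {Δ : ℝ} (hΔ : 0 ≤ Δ) {n : ℕ}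
    (L : StrongDual ℝ (Fin n → ℝ)) :
    ∃ v, (Measure.map (ouGrid X i a Δ n) ℙ).map L = gaussianReal 0 v := by
  obtain ⟨v, hv⟩ := hX.gaussian i n (fun j => j * Δ)
    (fun j => a * L fun k => if j = k then 1 else 0) fun j => by positivity
  refine ⟨v, ?_⟩
  rw [← hv, Measure.map_map L.continuous.measurable (hX.measurable_ouGrid i a Δ n)]
  congr 1 with ω
  refine (L.toLinearMap.pi_apply_eq_sum_univ _).trans (Finset.sum_congr rfl fun j _ => ?_)
  rw [ouGrid, smul_eq_mul, ContinuousLinearMap.coe_coe]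
  ring

lemma isGaussian_map_ouGrid (hX : IsOUPair θ X) (i : Fin 2) (a : ℝ) {Δ : ℝ} (hΔ : 0 ≤ Δ) (n : ℕ) :
    IsGaussian (Measure.map (ouGrid X i a Δ n) ℙ) :=
  isGaussian_of_map_eq_gaussianReal fun L => ⟨0, hX.exists_map_dual_ouGrid i a hΔ L⟩

lemma integral_id_map_ouGrid (hX : IsOUPair θ X) (i : Fin 2) (a : ℝ) {Δ : ℝ} (hΔ : 0 ≤ Δ) (n : ℕ) :
    (Measure.map (ouGrid X i a Δ n) ℙ)[id] = 0 := by
  have := hX.isGaussian_map_ouGrid i a hΔ n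
  refine (SeparatingDual.eq_zero_iff_forall_dual_eq_zero (R := ℝ) _).2 fun L => ?_
  obtain ⟨v, hv⟩ := hX.exists_map_dual_ouGrid i a hΔ L
  rw [← L.integral_comp_comm IsGaussian.integrable_id]
  calc _ = ∫ y, y ∂gaussianReal 0 v := by
        rw [← hv, integral_map L.continuous.measurable.aemeasurable (by fun_prop)]
        rfl
    _ = 0 := integral_id_gaussianReal

lemma secondMoment_map_ouGrid (hX : IsOUPair θ X) (i : Fin 2) (a : ℝ) {Δ : ℝ} (hΔ : 0 ≤ Δ)
    (n : ℕ) : secondMoment (Measure.map (ouGrid X i a Δ n) ℙ) =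
      (a ^ 2 / (2 * θ)) • geomCov (rexp (-(θ * Δ))) n := by
  ext j k
  have pull_out (ω : Ω) : ouGrid X i a Δ n ω j * ouGrid X i a Δ n ω k =
      a ^ 2 * (X i (j * Δ) ω * X i (k * Δ) ω) := by simp only [ouGrid]; ring
  rw [secondMoment, Matrix.of_apply,
    integral_map (hX.measurable_ouGrid i a Δ n).aemeasurable (by fun_prop)]
  simp only [pull_out]
  rw [integral_const_mul, hX.cov i _ _ (by positivity) (by positivity), exp_sub_exp_eq_geomCov θ hΔ,
    Matrix.smul_apply, smul_eq_mul]
  ring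

lemma secondMoment_ouGrid_mul (hX : IsOUPair θ X) (hθ : 0 < θ) {Δ : ℝ} (hΔ : 0 ≤ Δ) (n : ℕ) :
    secondMoment (Measure.map (ouGrid X 1 1 Δ n) ℙ) *
        secondMoment (Measure.map (ouGrid X 0 (2 * θ * √θ * (√(n * Δ) / n)) Δ n) ℙ) =
      (θ * Δ / n) • (geomCov (rexp (-(θ * Δ))) n * geomCov (rexp (-(θ * Δ))) n) := by
  have scale : 1 ^ 2 / (2 * θ) * ((2 * θ * √θ * (√(n * Δ) / n)) ^ 2 / (2 * θ)) = θ * Δ / n := by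
    rw [mul_pow, mul_pow, div_pow, sq_sqrt hθ.le, sq_sqrt (by positivity)]
    field_simp
  rw [hX.secondMoment_map_ouGrid 0 _ hΔ, hX.secondMoment_map_ouGrid 1 1 hΔ,
    Matrix.smul_mul, Matrix.mul_smul, smul_smul, scale]

variable {T : ℝ}

lemma ae_tendsto_ouA (hX : IsOUPair θ X) (hT : 0 < T) :
    ∀ᵐ ω ∂(ℙ : Measure Ω), Tendsto (fun n : ℕ => ouA X n (T / n) ω) atTop (𝓝 (ouF X T ω)) := by
  filter_upwards [hX.cont] with ω hω
  have path_continuous (i : Fin 2) : ContinuousOn (fun t => X i t ω) (Set.Icc 0 T) :=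
    (hω i).mono Set.Icc_subset_Ici_self
  refine ((tendsto_riemannSum hT ((path_continuous 0).mul (path_continuous 1))).const_mul
    (1 / √T)).congr' ?_
  filter_upwards [eventually_ne_atTop 0] with n hn
  have hnT : n * (T / n) = T := mul_div_cancel₀ T (Nat.cast_ne_zero.2 hn)
  rw [ouA, hnT, smul_eq_mul, ← mul_assoc, one_div_mul_eq_div, div_right_comm, div_sqrt]
  rfl

lemma aemeasurable_ouF (hX : IsOUPair θ X) (hT : 0 < T) : AEMeasurable (ouF X T) ℙ :=
  aemeasurable_of_tendsto_metrizable_ae atTop (fun n => (hX.measurable_ouA n (T / n)).aemeasurable)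
    (hX.ae_tendsto_ouA hT)

lemma dKol_map_ouF_eq (hX : IsOUPair θ X) (hθ : 0 < θ) (hT : 0 < T) :
    dKol (Measure.map (ouF X T) ℙ) (gaussianReal 0 (Real.toNNReal (1 / (4 * θ ^ 3)))) =
      dKol (Measure.map (fun ω => 2 * θ * √θ * ouF X T ω) ℙ) (gaussianReal 0 1) := by
  have unit_variance : (gaussianReal 0 (Real.toNNReal (1 / (4 * θ ^ 3)))).map (2 * θ * √θ * ·) =
      gaussianReal 0 1 := by
    rw [gaussianReal_map_const_mul, mul_zero]
    congr 1
    ext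
    rw [NNReal.coe_mul, NNReal.coe_mk, Real.coe_toNNReal _ (by positivity), mul_pow, sq_sqrt hθ.le,
      NNReal.coe_one]
    field_simp
    norm_num
  rw [← dKol_map_const_mul _ _ (a := 2 * θ * √θ) (by positivity), unit_variance,
    AEMeasurable.map_map_of_aemeasurable (by fun_prop) (hX.aemeasurable_ouF hT)]
  rfl

variable [IsProbabilityMeasure (ℙ : Measure Ω)]

lemma map_prodMk_ouGrid (hX : IsOUPair θ X) (a b Δ : ℝ) (n : ℕ) :
    Measure.map (fun ω => (ouGrid X 0 a Δ n ω, ouGrid X 1 b Δ n ω)) ℙ =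
      (Measure.map (ouGrid X 0 a Δ n) ℙ).prod (Measure.map (ouGrid X 1 b Δ n) ℙ) := by
  refine (indepFun_iff_map_prod_eq_prod_map_map (hX.measurable_ouGrid 0 a Δ n).aemeasurable
    (hX.measurable_ouGrid 1 b Δ n).aemeasurable).1 ?_
  have measurable_sample (c : ℝ) :
      Measurable fun (x : ℝ → ℝ) (j : Fin n) => c * x (j * Δ) := by fun_prop
  exact hX.indep.comp (measurable_sample a) (measurable_sample b)

lemma map_mul_ouA (hX : IsOUPair θ X) (c Δ : ℝ) (n : ℕ) :
    Measure.map (fun ω => c * ouA X n Δ ω) ℙ =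
      ((Measure.map (ouGrid X 0 (c * (√(n * Δ) / n)) Δ n) ℙ).prod
        (Measure.map (ouGrid X 1 1 Δ n) ℙ)).map fun p => p.1 ⬝ᵥ p.2 := by
  simp only [mul_ouA_eq_dotProduct_ouGrid]
  rw [← hX.map_prodMk_ouGrid, Measure.map_map (by unfold dotProduct; fun_prop)
    ((hX.measurable_ouGrid 0 _ Δ n).prodMk (hX.measurable_ouGrid 1 1 Δ n))]
  rfl

lemma dKol_map_ouA_le (hX : IsOUPair θ X) (hθ : 0 < θ) {Δ : ℝ} (hΔ : 0 < Δ) {n : ℕ} (hn : n ≠ 0) :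
    dKol (Measure.map (fun ω => 2 * θ * √θ * ouA X n Δ ω) ℙ) (gaussianReal 0 1) ≤
      √((θ * Δ + 5 / 2 * (1 + 2 * (θ * Δ)) ^ 2 / (n * (θ * Δ))) ^ 2 +
        2 * ((2 + θ * Δ) ^ 3 / (n * (θ * Δ)))) := by
  have hx : 0 < θ * Δ := by positivity
  have (i : Fin 2) (a : ℝ) := hX.isGaussian_map_ouGrid i a hΔ.le n
  rw [hX.map_mul_ouA]
  refine (dKol_map_prod_dotProduct_le (hX.integral_id_map_ouGrid 0 _ hΔ.le n)
    (hX.integral_id_map_ouGrid 1 1 hΔ.le n)).trans (Real.sqrt_le_sqrt ?_)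
  rw [hX.secondMoment_ouGrid_mul hθ hΔ.le, Matrix.smul_mul, Matrix.mul_smul, smul_smul,
    Matrix.trace_smul, Matrix.trace_smul, smul_eq_mul, smul_eq_mul, ← sq (θ * Δ / n)]
  gcongr ?_ + 2 * ?_
  · have mean := abs_le.1 (abs_trace_geomCov_sub_one_le hx hn)
    exact sq_le_sq' mean.1 mean.2
  · exact trace_geomCov_pow_four_scaled_le hx hn

lemma dKol_map_ouF_le (hX : IsOUPair θ X) (hθ : 0 < θ) (hT : 0 < T) :
    dKol (Measure.map (fun ω => 2 * θ * √θ * ouF X T ω) ℙ) (gaussianReal 0 1) ≤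
      √((5 / 2 / (θ * T)) ^ 2 + 16 / (θ * T)) := by
  set a := 2 * θ * √θ
  let bound (x : ℝ) := √((x + 5 / 2 * (1 + 2 * x) ^ 2 / (θ * T)) ^ 2 + 2 * ((2 + x) ^ 3 / (θ * T)))
  have bound_continuous : Continuous bound := by fun_prop
  have step_tendsto : Tendsto (fun n : ℕ => θ * (T / n)) atTop (𝓝 0) := by
    simpa using (tendsto_const_div_atTop_nhds_zero_nat T).const_mul θ
  have bound_tendsto := (bound_continuous.tendsto 0).comp step_tendsto
  have bound_zero : bound 0 = √((5 / 2 / (θ * T)) ^ 2 + 16 / (θ * T)) := by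
    simp only [bound]
    congr 1
    ring
  have law_tendsto := tendstoInDistribution_of_ae_tendsto (μ' := ℙ)
    (fun n : ℕ => (hX.measurable_ouA n (T / n)).aemeasurable.const_mul a)
    ((hX.aemeasurable_ouF hT).const_mul a)
    ((hX.ae_tendsto_ouA hT).mono fun ω hω => hω.const_mul a)
  rw [← bound_zero]
  refine dKol_le_of_tendsto law_tendsto.tendsto bound_tendsto ?_
  filter_upwards [eventually_ne_atTop 0] with n hn
  have horizon : n * (θ * (T / n)) = θ * T := by field_simp
  have discrete := hX.dKol_map_ouA_le hθ (Δ := T / n) (by positivity) hn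
  rwa [horizon] at discrete

lemma dKol_map_ouF_le_div_sqrt (hX : IsOUPair θ X) (hθ : 0 < θ) (hT : 0 < T) :
    dKol (Measure.map (fun ω => 2 * θ * √θ * ouF X T ω) ℙ) (gaussianReal 0 1) ≤
      √((2 + 7 / (4 * θ)) ^ 2 + 27 / (4 * θ)) / √T := by
  have : IsProbabilityMeasure (Measure.map (fun ω => 2 * θ * √θ * ouF X T ω) ℙ) :=
    Measure.isProbabilityMeasure_map ((hX.aemeasurable_ouF hT).const_mul _)
  rw [← Real.sqrt_div (by positivity)]
  rcases le_or_gt 1 (((2 + 7 / (4 * θ)) ^ 2 + 27 / (4 * θ)) / T) with small_T | large_T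
  · exact dKol_le_one.trans (Real.one_le_sqrt.2 small_T)
  · exact (hX.dKol_map_ouF_le hθ hT).trans
      (Real.sqrt_le_sqrt (sq_add_sixteen_div_le hθ hT ((div_lt_one hT).1 large_T).le))

end IsOUPair

end OrnsteinUhlenbeck

/-- `d_Kol(2θ^{3/2}F_T, N(0,1)) ≤ c(θ)/√T` for `T ≥ 1`, with
`c(θ) = √((2+7/(4θ))² + 27/(4θ))`; consequently `F_T ⇒ N(0, 1/(4θ³))`. -/
theorem stmt_1 (θ : ℝ) (hθ : 0 < θ) [IsProbabilityMeasure (ℙ : Measure Ω)]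
    (X : Fin 2 → ℝ → Ω → ℝ) (hX : IsOUPair θ X) :
    (∀ T : ℝ, 1 ≤ T →
      dKol (Measure.map (fun ω => 2 * θ * Real.sqrt θ * ouF X T ω) ℙ) (gaussianReal 0 1)
        ≤ Real.sqrt ((2 + 7 / (4 * θ)) ^ 2 + 27 / (4 * θ)) / Real.sqrt T) ∧
    Tendsto (fun T : ℝ =>
        dKol (Measure.map (ouF X T) ℙ) (gaussianReal 0 (Real.toNNReal (1 / (4 * θ ^ 3)))))
      atTop (𝓝 0) := by
  have rate (T : ℝ) (hT : 1 ≤ T) := hX.dKol_map_ouF_le_div_sqrt hθ (zero_lt_one.trans_le hT)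
  refine ⟨rate, squeeze_zero' (.of_forall fun T => dKol_nonneg _ _) ?_
    (tendsto_sqrt_atTop.const_div_atTop √((2 + 7 / (4 * θ)) ^ 2 + 27 / (4 * θ)))⟩
  filter_upwards [eventually_ge_atTop 1] with T hT
  rw [hX.dKol_map_ouF_eq hθ (zero_lt_one.trans_le hT)]
  exact rate T hT

end
end

section
/- Let X be a real random variable and let Y = N · N′ be defined on the same probability space, where N ~ N(0, σ₁²) and N′ ~ N(0, σ₂²) are independent centered Gaussian random variables (σ₁, σ₂ > 0). Then for every β with (2√3/3)·σ₁σ₂ < β < 4, d_Kol(X + Y, N(0,1)) ≤ d_Kol(X, N(0,1)) + β(1 + ln(4/β)). -/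
open MeasureTheory ProbabilityTheory Real Filter Finset
open scoped Topology ENNReal NNReal

noncomputable section

variable {Ω : Type} [MeasureSpace Ω]

/-!
On the event `|Y| < ε`, the inequality `X + Y ≤ z` implies `X ≤ z + ε` and is implied by
`X ≤ z - ε`. Hence adding `Y` to `X` costs at most `P (ε ≤ |Y|)` plus the largest mass that `N(0,1)`
gives to an interval of length `ε`, which is at most `ε` because the density is at most `1`.
For `Y = N * N'`, conditioning on `N` gives `E exp (t Y) = (1 - t² σ₁² σ₂²) ^ (-1/2)`.
At `t = ±1/β` this is at most `2` since `4 σ₁² σ₂² ≤ 3 β²`, so Chernoff's bound yields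
`P (ε ≤ |Y|) ≤ 4 exp (-ε/β)`, which equals `β` for `ε = β log (4/β)`.
-/

section KolmogorovDistance

lemma abs_sub_measureReal_Iic_le_dKol (μ ν : Measure ℝ) [IsFiniteMeasure μ] [IsFiniteMeasure ν]
    (z : ℝ) : |μ.real (Set.Iic z) - ν.real (Set.Iic z)| ≤ dKol μ ν := by
  refine le_ciSup (f := fun z ↦ |μ.real (Set.Iic z) - ν.real (Set.Iic z)|) ?_ z
  refine ⟨max (μ.real Set.univ) (ν.real Set.univ), ?_⟩
  rintro _ ⟨w, rfl⟩
  exact abs_sub_le_of_nonneg_of_le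
    measureReal_nonneg ((measureReal_mono (Set.subset_univ _)).trans (le_max_left _ _))
    measureReal_nonneg ((measureReal_mono (Set.subset_univ _)).trans (le_max_right _ _))

variable {Ω' : Type*} {mΩ' : MeasurableSpace Ω'} {P : Measure Ω'} [IsFiniteMeasure P]

lemma measureReal_add_le_le (X Y : Ω' → ℝ) (z ε : ℝ) :
    P.real {ω | X ω + Y ω ≤ z} ≤ P.real {ω | X ω ≤ z + ε} + P.real {ω | ε ≤ |Y ω|} := by
  refine (measureReal_mono fun ω (hω : X ω + Y ω ≤ z) ↦ ?_).trans (measureReal_union_le _ _)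
  rcases le_or_gt ε |Y ω| with hY | hY
  · exact Or.inr hY
  · exact Or.inl (show X ω ≤ z + ε by linarith [neg_abs_le (Y ω)])

lemma measureReal_le_sub_le (X Y : Ω' → ℝ) (z ε : ℝ) :
    P.real {ω | X ω ≤ z - ε} ≤ P.real {ω | X ω + Y ω ≤ z} + P.real {ω | ε ≤ |Y ω|} := by
  simpa using measureReal_add_le_le (P := P) (fun ω ↦ X ω + Y ω) (fun ω ↦ -Y ω) (z - ε) ε

theorem dKol_map_add_le {X Y : Ω' → ℝ} (hX : AEMeasurable X P) (hY : AEMeasurable Y P)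
    {ν : Measure ℝ} [IsFiniteMeasure ν] {ε δ : ℝ}
    (hν : ∀ z, ν.real (Set.Ioc z (z + ε)) ≤ δ) :
    dKol (P.map fun ω ↦ X ω + Y ω) ν ≤ dKol (P.map X) ν + δ + P.real {ω | ε ≤ |Y ω|} := by
  have map_Iic {Z : Ω' → ℝ} (hZ : AEMeasurable Z P) (z : ℝ) :
      (P.map Z).real (Set.Iic z) = P.real {ω | Z ω ≤ z} :=
    map_measureReal_apply_of_aemeasurable hZ measurableSet_Iic
  have ν_Iic_add (z : ℝ) : ν.real (Set.Iic (z + ε)) ≤ ν.real (Set.Iic z) + δ :=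
    calc ν.real (Set.Iic (z + ε))
      _ ≤ ν.real (Set.Iic z ∪ Set.Ioc z (z + ε)) :=
        measureReal_mono Set.Iic_subset_Iic_union_Ioc
      _ ≤ ν.real (Set.Iic z) + ν.real (Set.Ioc z (z + ε)) := measureReal_union_le _ _
      _ ≤ ν.real (Set.Iic z) + δ := by gcongr; exact hν z
  refine ciSup_le fun z ↦ ?_
  change |(P.map fun ω ↦ X ω + Y ω).real (Set.Iic z) - ν.real (Set.Iic z)| ≤ _
  have upper := abs_le.1 (abs_sub_measureReal_Iic_le_dKol (P.map X) ν (z + ε))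
  have lower := abs_le.1 (abs_sub_measureReal_Iic_le_dKol (P.map X) ν (z - ε))
  have ν_Iic_sub := ν_Iic_add (z - ε)
  rw [map_Iic hX] at upper lower
  rw [sub_add_cancel] at ν_Iic_sub
  rw [map_Iic (Z := fun ω ↦ X ω + Y ω) (hX.add hY), abs_le]
  constructor
  · linarith [measureReal_le_sub_le (P := P) X Y z ε]
  · linarith [measureReal_add_le_le (P := P) X Y z ε, ν_Iic_add z]

end KolmogorovDistance

section GaussianDensity

lemma gaussianPDFReal_le (m : ℝ) (v : ℝ≥0) (x : ℝ) : gaussianPDFReal m v x ≤ (√(2 * π * v))⁻¹ := by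
  refine mul_le_of_le_one_right (by positivity) (exp_le_one_iff.2 ?_)
  exact div_nonpos_of_nonpos_of_nonneg (neg_nonpos.2 (sq_nonneg _)) (by positivity)

lemma gaussianReal_real_le_mul_volume_real (m : ℝ) {v : ℝ≥0} (hv : v ≠ 0) {s : Set ℝ}
    (hs : volume s ≠ ∞) : (gaussianReal m v).real s ≤ (√(2 * π * v))⁻¹ * volume.real s := by
  have hs_integral : (gaussianReal m v).real s = ∫ x in s, gaussianPDFReal m v x := by
    rw [measureReal_def, gaussianReal_apply_eq_integral m hv,
      ENNReal.toReal_ofReal (integral_nonneg (gaussianPDFReal_nonneg m v))]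
  rw [hs_integral]
  refine (le_norm_self _).trans (norm_setIntegral_le_of_norm_le_const hs.lt_top fun x _ ↦ ?_)
  rw [norm_of_nonneg (gaussianPDFReal_nonneg m v x)]
  exact gaussianPDFReal_le m v x

lemma gaussianReal_zero_one_real_Ioc_le {a b : ℝ} (hab : a ≤ b) :
    (gaussianReal 0 1).real (Set.Ioc a b) ≤ b - a := by
  have density_le_one : (√(2 * π * (1 : ℝ≥0)))⁻¹ ≤ 1 := by
    refine inv_le_one_of_one_le₀ (one_le_sqrt.2 ?_)
    rw [NNReal.coe_one, mul_one]
    linarith [pi_gt_three]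
  calc (gaussianReal 0 1).real (Set.Ioc a b)
    _ ≤ (√(2 * π * (1 : ℝ≥0)))⁻¹ * volume.real (Set.Ioc a b) :=
      gaussianReal_real_le_mul_volume_real 0 one_ne_zero measure_Ioc_lt_top.ne
    _ ≤ 1 * volume.real (Set.Ioc a b) := by gcongr
    _ = b - a := by rw [one_mul, volume_real_Ioc_of_le hab]

end GaussianDensity

section GaussianProduct

-- If `1 ≤ 2 * v * a` then `exp (a * x ^ 2)` is not integrable and both sides are `0`.
lemma mgf_sq_gaussianReal (v : ℝ≥0) (a : ℝ) :
    mgf (fun x ↦ x ^ 2) (gaussianReal 0 v) a = (√(1 - 2 * v * a))⁻¹ := by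
  rcases eq_or_ne v 0 with rfl | hv
  · simp [mgf]
  have integrand_eq (x : ℝ) : gaussianPDFReal 0 v x • exp (a * x ^ 2)
      = (√(2 * π * v))⁻¹ * exp (-((1 - 2 * v * a) / (2 * v)) * x ^ 2) := by
    rw [gaussianPDFReal, smul_eq_mul, mul_assoc, ← exp_add]
    congr 2
    field_simp
    ring
  have ratio_eq : π / ((1 - 2 * v * a) / (2 * v)) = 2 * π * v / (1 - 2 * v * a) := by
    field_simp
  simp_rw [mgf, integral_gaussianReal_eq_integral_smul hv, integrand_eq, integral_const_mul,
    integral_gaussian, ratio_eq]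
  rw [sqrt_div (by positivity), div_eq_mul_inv, inv_mul_cancel_left₀ (by positivity)]

lemma integrable_exp_mul_sq_gaussianReal {v : ℝ≥0} {a : ℝ} (ha : 2 * v * a < 1) :
    Integrable (fun x ↦ exp (a * x ^ 2)) (gaussianReal 0 v) := by
  rw [← mgf_pos_iff, mgf_sq_gaussianReal]
  exact inv_pos.2 (sqrt_pos.2 (sub_pos.2 ha))

lemma integral_exp_mul_mul_gaussianReal (w : ℝ≥0) (t x : ℝ) :
    ∫ y, exp (t * (x * y)) ∂gaussianReal 0 w = exp (w * t ^ 2 / 2 * x ^ 2) := by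
  have mgf_eq := congrFun (mgf_fun_id_gaussianReal (μ := 0) (v := w)) (t * x)
  simp only [mgf, mul_assoc] at mgf_eq
  rw [mgf_eq]
  ring_nf

lemma integrable_exp_mul_mul_gaussianReal_prod {v w : ℝ≥0} {t : ℝ} (ht : v * w * t ^ 2 < 1) :
    Integrable (fun p : ℝ × ℝ ↦ exp (t * (p.1 * p.2)))
      ((gaussianReal 0 v).prod (gaussianReal 0 w)) := by
  refine (integrable_prod_iff (by fun_prop)).2 ⟨.of_forall fun x ↦ ?_, ?_⟩
  · simpa only [mul_assoc] using integrable_exp_mul_gaussianReal (t * x)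
  · simp_rw [norm_of_nonneg (exp_nonneg _), integral_exp_mul_mul_gaussianReal]
    exact integrable_exp_mul_sq_gaussianReal (by linarith)

lemma mgf_mul_gaussianReal_prod {v w : ℝ≥0} {t : ℝ} (ht : v * w * t ^ 2 < 1) :
    mgf (fun p : ℝ × ℝ ↦ p.1 * p.2) ((gaussianReal 0 v).prod (gaussianReal 0 w)) t
      = (√(1 - v * w * t ^ 2))⁻¹ := by
  rw [mgf, integral_prod _ (integrable_exp_mul_mul_gaussianReal_prod ht)]
  simp_rw [integral_exp_mul_mul_gaussianReal]
  rw [← mgf, mgf_sq_gaussianReal]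
  ring_nf

end GaussianProduct

section Tail

variable {Ω' : Type*} {mΩ' : MeasurableSpace Ω'} {P : Measure Ω'}

lemma measureReal_le_abs_le_exp_mul_mgf_add_mgf [IsFiniteMeasure P] {Y : Ω' → ℝ} {t : ℝ} (ε : ℝ)
    (ht : 0 ≤ t) (hpos : Integrable (fun ω ↦ exp (t * Y ω)) P)
    (hneg : Integrable (fun ω ↦ exp (-t * Y ω)) P) :
    P.real {ω | ε ≤ |Y ω|} ≤ exp (-t * ε) * (mgf Y P t + mgf Y P (-t)) := by
  have split_abs : {ω | ε ≤ |Y ω|} = {ω | ε ≤ Y ω} ∪ {ω | Y ω ≤ -ε} := by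
    ext ω
    exact le_abs.trans (or_congr_right (le_neg (a := ε)))
  calc P.real {ω | ε ≤ |Y ω|}
    _ ≤ P.real {ω | ε ≤ Y ω} + P.real {ω | Y ω ≤ -ε} := split_abs ▸ measureReal_union_le _ _
    _ ≤ exp (-t * ε) * mgf Y P t + exp (-(-t) * -ε) * mgf Y P (-t) :=
      add_le_add (measure_ge_le_exp_mul_mgf ε ht hpos)
        (measure_le_le_exp_mul_mgf (-ε) (neg_nonpos.2 ht) hneg)
    _ = exp (-t * ε) * (mgf Y P t + mgf Y P (-t)) := by rw [neg_mul_neg, mul_add]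

variable {N N' : Ω' → ℝ} {v w : ℝ≥0}

theorem measureReal_le_abs_mul_le_of_gaussianReal (hN : HasLaw N (gaussianReal 0 v) P)
    (hN' : HasLaw N' (gaussianReal 0 w) P) (hind : IndepFun N N' P) {t : ℝ} (ht : 0 ≤ t)
    (ht_lt : v * w * t ^ 2 < 1) (ε : ℝ) :
    P.real {ω | ε ≤ |N ω * N' ω|} ≤ 2 * (√(1 - v * w * t ^ 2))⁻¹ * exp (-t * ε) := by
  have := hN.isProbabilityMeasure
  have hprod := (indepFun_iff_hasLaw_prodMk_prod hN hN').1 hind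
  have ht_neg : v * w * (-t) ^ 2 < 1 := by rwa [neg_sq]
  rw [hprod.measureReal_eq (p := fun p : ℝ × ℝ ↦ ε ≤ |p.1 * p.2|)
    (measurableSet_le (by fun_prop) (by fun_prop))]
  refine (measureReal_le_abs_le_exp_mul_mgf_add_mgf ε ht
    (integrable_exp_mul_mul_gaussianReal_prod ht_lt)
    (integrable_exp_mul_mul_gaussianReal_prod ht_neg)).trans_eq ?_
  rw [mgf_mul_gaussianReal_prod ht_lt, mgf_mul_gaussianReal_prod ht_neg, neg_sq]
  ring

lemma measureReal_le_abs_mul_le_four_mul_exp (hN : HasLaw N (gaussianReal 0 v) P)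
    (hN' : HasLaw N' (gaussianReal 0 w) P) (hind : IndepFun N N' P) {β : ℝ} (hβ : 0 < β)
    (hvw : 4 * (v * w) ≤ 3 * β ^ 2) (ε : ℝ) :
    P.real {ω | ε ≤ |N ω * N' ω|} ≤ 4 * exp (-ε / β) := by
  have ratio_le : v * w * β⁻¹ ^ 2 ≤ 3 / 4 := by
    rw [inv_pow, mul_inv_le_iff₀ (by positivity)]
    linarith
  have half_le_sqrt : 2⁻¹ ≤ √(1 - v * w * β⁻¹ ^ 2) := le_sqrt_of_sq_le (by linarith)
  calc P.real {ω | ε ≤ |N ω * N' ω|}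
    _ ≤ 2 * (√(1 - v * w * β⁻¹ ^ 2))⁻¹ * exp (-β⁻¹ * ε) :=
      measureReal_le_abs_mul_le_of_gaussianReal hN hN' hind (by positivity) (by linarith) ε
    _ ≤ 2 * 2 * exp (-β⁻¹ * ε) := by gcongr; exact inv_le_of_inv_le₀ two_pos half_le_sqrt
    _ = 4 * exp (-ε / β) := by ring_nf

lemma measureReal_mul_log_le_abs_mul_le (hN : HasLaw N (gaussianReal 0 v) P)
    (hN' : HasLaw N' (gaussianReal 0 w) P) (hind : IndepFun N N' P) {β : ℝ} (hβ : 0 < β)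
    (hvw : 4 * (v * w) ≤ 3 * β ^ 2) :
    P.real {ω | β * log (4 / β) ≤ |N ω * N' ω|} ≤ β := by
  refine (measureReal_le_abs_mul_le_four_mul_exp hN hN' hind hβ hvw _).trans_eq ?_
  rw [neg_div, mul_div_cancel_left₀ _ hβ.ne', exp_neg, exp_log (by positivity)]
  field_simp

end Tail

/-- if `Y = N·N'` is a product of independent centered Gaussians with
variances `σ₁², σ₂²`, then for every `β` with `(2√3/3)σ₁σ₂ < β < 4`,
`d_Kol(X+Y, N(0,1)) ≤ d_Kol(X, N(0,1)) + β(1 + ln(4/β))`. -/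
theorem stmt_5 {Ω' : Type} [MeasureSpace Ω'] [IsProbabilityMeasure (ℙ : Measure Ω')]
    (σ₁ σ₂ : ℝ) (hσ₁ : 0 < σ₁) (hσ₂ : 0 < σ₂) (X N N' : Ω' → ℝ)
    (hmX : Measurable X) (hmN : Measurable N) (hmN' : Measurable N')
    (hN : Measure.map N ℙ = gaussianReal 0 (Real.toNNReal (σ₁ ^ 2)))
    (hN' : Measure.map N' ℙ = gaussianReal 0 (Real.toNNReal (σ₂ ^ 2)))
    (hind : IndepFun N N' ℙ)
    (β : ℝ) (hβl : 2 * Real.sqrt 3 / 3 * (σ₁ * σ₂) < β) (hβu : β < 4) :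
    dKol (Measure.map (fun ω => X ω + N ω * N' ω) ℙ) (gaussianReal 0 1)
      ≤ dKol (Measure.map X ℙ) (gaussianReal 0 1) + β * (1 + Real.log (4 / β)) := by
  have hβ : 0 < β := lt_trans (by positivity) hβl
  have variances_le : 4 * (((σ₁ ^ 2).toNNReal : ℝ) * (σ₂ ^ 2).toNNReal) ≤ 3 * β ^ 2 := by
    have hsq := pow_le_pow_left₀ (by positivity) hβl.le 2
    rw [mul_pow, div_pow, mul_pow, sq_sqrt (by norm_num)] at hsq
    rw [coe_toNNReal _ (sq_nonneg σ₁), coe_toNNReal _ (sq_nonneg σ₂)]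
    linarith
  set ε := β * log (4 / β) with hε
  have hε_nonneg : 0 ≤ ε := mul_nonneg hβ.le (log_nonneg ((one_le_div hβ).2 hβu.le))
  have interval_le (z : ℝ) : (gaussianReal 0 1).real (Set.Ioc z (z + ε)) ≤ ε := by
    simpa using gaussianReal_zero_one_real_Ioc_le (le_add_of_nonneg_right hε_nonneg)
  have tail_le : (ℙ : Measure Ω').real {ω | ε ≤ |N ω * N' ω|} ≤ β :=
    measureReal_mul_log_le_abs_mul_le ⟨hmN.aemeasurable, hN⟩ ⟨hmN'.aemeasurable, hN'⟩ hind hβ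
      variances_le
  calc dKol (Measure.map (fun ω => X ω + N ω * N' ω) ℙ) (gaussianReal 0 1)
    _ ≤ dKol (Measure.map X ℙ) (gaussianReal 0 1) + ε
        + (ℙ : Measure Ω').real {ω | ε ≤ |N ω * N' ω|} :=
      dKol_map_add_le hmX.aemeasurable (hmN.mul hmN').aemeasurable interval_le
    _ ≤ dKol (Measure.map X ℙ) (gaussianReal 0 1) + β * (1 + log (4 / β)) := by
      rw [mul_one_add, ← hε]
      linarith

end
end
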